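/- arXiv:2404.07393 — 4 statements merged into one kernel-verified Lean document; each statement's English description precedes it below -/
import Mathlib

section
/- Let c ≥ 1 and let λ = (λ_1, …, λ_α, c^β, λ_{α+β+1}, …) be a partition of n with λ_{α+β+1} < c, and c < λ_α when α > 0, and let μ = (λ_1, …, λ_α, c+1, c^{β−2}, c−1, λ_{α+β+1}, …). If β ≥ α + 2, or β = α + 1 with α ≥ 2, or β = α with α ≥ 4, then μ covers λ in the immersion poset on partitions of n. -/
open Finset MvPolynomial

/-- A partition of `n`, represented as a weakly decreasing list of positive
integers summing to `n`. -/
def IsPartitionOf (n : ℕ) (l : List ℕ) : Prop :=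
  l.Pairwise (· ≥ ·) ∧ (∀ x ∈ l, 0 < x) ∧ l.sum = n

/-- `T : ℕ → ℕ → ℕ` is a semistandard Young tableau of shape `l`
(rows weakly increase, columns strictly increase, entries are `0` outside
of the diagram; entries are 0-indexed, so entry value `k` stands for the
letter `k+1`). -/
def IsSSYT (l : List ℕ) (T : ℕ → ℕ → ℕ) : Prop :=
  (∀ i j1 j2, j1 ≤ j2 → j2 < l.getD i 0 → T i j1 ≤ T i j2) ∧
  (∀ i1 i2 j, i1 < i2 → j < l.getD i2 0 → T i1 j < T i2 j) ∧
  (∀ i j, l.getD i 0 ≤ j → T i j = 0)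

/-- The tableau `T` of shape `l` has content `ν`: for every `k`, the number of
cells of the diagram of `l` whose entry is `k` equals the `(k+1)`-st part of `ν`. -/
def HasContent (l : List ℕ) (T : ℕ → ℕ → ℕ) (ν : List ℕ) : Prop :=
  ∀ k, Nat.card {c : ℕ × ℕ // c.2 < l.getD c.1 0 ∧ T c.1 c.2 = k} = ν.getD k 0

/-- The Kostka number `K_{l,ν}`: the number of semistandard Young tableaux of
shape `l` and content `ν`. -/
noncomputable def kostka (l ν : List ℕ) : ℕ :=
  Nat.card {T : ℕ → ℕ → ℕ // IsSSYT l T ∧ HasContent l T ν}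

/-- `f^λ`, the number of standard Young tableaux of shape `l`. -/
noncomputable def fSYT (l : List ℕ) : ℕ := kostka l (List.replicate l.sum 1)

/-- Dominance order: all partial sums of `l` are at most those of `m`. -/
def DomLE (l m : List ℕ) : Prop := ∀ k, (l.take k).sum ≤ (m.take k).sum

/-- The standard immersion order: dominance together with `f^λ ≤ f^μ`. -/
def StdLE (l m : List ℕ) : Prop := DomLE l m ∧ fSYT l ≤ fSYT m

/-- Strict standard immersion order. -/
def StdLT (l m : List ℕ) : Prop := StdLE l m ∧ l ≠ m

/-- `m` covers `l` in the standard immersion poset on partitions of `n`. -/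
def StdCovBy (n : ℕ) (l m : List ℕ) : Prop :=
  StdLT l m ∧ ∀ ν, IsPartitionOf n ν → StdLT l ν → ¬ StdLT ν m

/-- `l` is a maximal element of the standard immersion poset on partitions of `n`. -/
def StdMaximal (n : ℕ) (l : List ℕ) : Prop :=
  ∀ m, IsPartitionOf n m → m ≠ l → ¬ StdLE l m

/-- The immersion order on partitions of `n`: `l ≤_I m` iff
`K_{l,α} ≤ K_{m,α}` for every partition `α` of `n`. -/
def ImmersionLE (n : ℕ) (l m : List ℕ) : Prop :=
  ∀ ν, IsPartitionOf n ν → kostka l ν ≤ kostka m ν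

/-- Strict immersion order. -/
def ImmersionLT (n : ℕ) (l m : List ℕ) : Prop := ImmersionLE n l m ∧ l ≠ m

/-- `m` covers `l` in the immersion poset on partitions of `n`. -/
def ImmersionCovBy (n : ℕ) (l m : List ℕ) : Prop :=
  ImmersionLT n l m ∧ ∀ ν, IsPartitionOf n ν → ImmersionLT n l ν → ¬ ImmersionLT n ν m

/-- The partition `μ` obtained from `λ = pre ++ c^β ++ suf` by moving one box
from the last row of the block of rows of length `c` to the first row of that
block (the part `c - 1` is dropped when it equals zero). -/
def movedShape (c β : ℕ) (pre suf : List ℕ) : List ℕ :=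
  pre ++ (c + 1) :: (List.replicate (β - 2) c ++ ((c - 1) :: suf).filter (fun x => x ≠ 0))


/-!
A semistandard tableau is a chain of shapes growing by horizontal strips, and we record such a
chain by its column lengths. With `b = β - 2`, moving the box changes only two adjacent columns, of
lengths `α + (b + 2)` and `α` before the move and `α + 1 + b` and `α + 1` after it, and the content
of a tableau depends on these two columns only through the sum of their lengths. Fix all other
columns and this sum. The difference of the two lengths is then a `±1` lattice path which pauses
whenever both or neither of the columns grow, and which has to stay in a region cut out by the
neighbouring columns. So `K_{λ,ν} ≤ K_{μ,ν}` as soon as each such region contains at most as many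
paths ending at `b + 2` as paths ending at `b`. Since an upper boundary cuts off high end points
more than low ones, it suffices to compare unrestricted paths, that is, ballot numbers, and their
ratio gives the condition `2 * α ≤ b * (b + 3)`, which is `2 * α + β + 2 ≤ β ^ 2`.

That no partition lies strictly between `λ` and `μ` holds already in the dominance order, which
contains the immersion order because `K_{λ,λ} > 0`.
-/

/-! ### Ballot numbers -/

/-- The ballot number: the number of lattice paths with `m` steps `±1` that start at height `0`,
end at height `h` and never become negative. -/
def ballot : ℕ → ℕ → ℕ
  | 0, 0 => 1
  | 0, _ + 1 => 0
  | m + 1, 0 => ballot m 1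
  | m + 1, h + 1 => ballot m (h + 2) + ballot m h

theorem ballot_eq_zero_of_lt : ∀ {m h : ℕ}, m < h → ballot m h = 0
  | 0, _ + 1, _ => rfl
  | m + 1, h + 1, hmh => by
    simp only [ballot, ballot_eq_zero_of_lt (show m < h + 2 by omega),
      ballot_eq_zero_of_lt (show m < h by omega)]

theorem ballot_mul_factorial (m : ℕ) : ∀ M h, m = 2 * M + h →
    ballot m h * (M.factorial * (M + h + 1).factorial) = (h + 1) * m.factorial := by
  induction m with
  | zero =>
    intro M h hm
    obtain ⟨rfl, rfl⟩ : M = 0 ∧ h = 0 := by omega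
    simp [ballot]
  | succ m ih =>
    rintro (_ | M) (_ | h) hm
    · omega
    · obtain rfl : m = h := by omega
      have hup := ih 0 m (by omega)
      simp only [ballot, ballot_eq_zero_of_lt (show m < m + 2 by omega), zero_add,
        Nat.factorial_succ, Nat.factorial_zero] at hup ⊢
      linear_combination (m + 2) * hup
    · obtain rfl : m = 2 * M + 1 := by omega
      have hdown := ih M 1 rfl
      simp only [ballot, Nat.factorial_succ] at hdown ⊢
      linear_combination (M + 1) * hdown
    · obtain rfl : m = 2 * M + h + 2 := by omega
      have hdown := ih M (h + 2) (by omega)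
      have hup := ih (M + 1) h (by omega)
      rw [show M + (h + 2) + 1 = M + h + 2 + 1 by omega] at hdown
      rw [show M + 1 + h + 1 = M + h + 1 + 1 by omega] at hup
      rw [show M + 1 + (h + 1) + 1 = M + h + 2 + 1 by omega]
      simp only [ballot, Nat.factorial_succ] at hdown hup ⊢
      linear_combination (M + 1) * hdown + (M + h + 3) * hup

theorem ballot_pos {m M h : ℕ} (hm : m = 2 * M + h) : 0 < ballot m h := by
  have hpos : 0 < (h + 1) * m.factorial := by positivity
  rw [← ballot_mul_factorial m M h hm] at hpos
  exact Nat.pos_of_mul_pos_right hpos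

theorem ballot_mul_eq_ballot_add_two_mul {m M h : ℕ} (hm : m = 2 * M + (h + 2)) :
    ballot m h * ((M + 1) * (h + 3)) = ballot m (h + 2) * ((M + h + 3) * (h + 1)) := by
  have hlow := ballot_mul_factorial m (M + 1) h (by omega)
  have hhigh := ballot_mul_factorial m M (h + 2) hm
  rw [show M + 1 + h + 1 = M + h + 2 by omega, Nat.factorial_succ M] at hlow
  rw [show M + (h + 2) + 1 = M + h + 2 + 1 by omega, Nat.factorial_succ (M + h + 2)] at hhigh
  have hpos : 0 < M.factorial * (M + h + 2).factorial := by positivity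
  apply Nat.eq_of_mul_eq_mul_right hpos
  linear_combination (h + 3) * hlow - (h + 1) * hhigh

theorem ballot_add_two_le {m M h : ℕ} (hm : m = 2 * M + (h + 2)) (hM : 2 * M ≤ h * (h + 3)) :
    ballot m (h + 2) ≤ ballot m h := by
  have hcoef : (M + 1) * (h + 3) ≤ (M + h + 3) * (h + 1) := by linarith
  refine le_of_mul_le_mul_right ?_ (show 0 < (M + 1) * (h + 3) by positivity)
  rw [ballot_mul_eq_ballot_add_two_mul hm]
  exact Nat.mul_le_mul_left _ hcoef

/-! ### Lattice paths with pauses in a region -/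

/-- One step of a lattice path with pauses: the height changes by `±1` if the step is active, and
does not change otherwise. -/
def IsStep (active : Prop) (a b : ℕ) : Prop :=
  (active ∧ (b = a + 1 ∨ a = b + 1)) ∨ (¬ active ∧ b = a)

/-- Lattice paths with pauses: `p` starts at height `0`, is at height `h` at time `N`, moves exactly
at the times `x < N` with `e x`, and has `p x ∈ U x` throughout. It is frozen after time `N`, so
that a path of length `N` is encoded by a unique function on `ℕ`. -/
structure IsPath (e : ℕ → Prop) (U : ℕ → Set ℕ) (N h : ℕ) (p : ℕ → ℕ) : Prop where
  zero : p 0 = 0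
  step : ∀ x < N, IsStep (e x) (p x) (p (x + 1))
  mem : ∀ x ≤ N, p x ∈ U x
  eq_of_le : ∀ x, N ≤ x → p x = h

/-- The number of lattice paths with pauses of length `N` from height `0` to height `h`. -/
noncomputable def numPaths (e : ℕ → Prop) (U : ℕ → Set ℕ) (N h : ℕ) : ℕ :=
  Nat.card {p // IsPath e U N h p}

section Paths

variable {e : ℕ → Prop} {U : ℕ → Set ℕ} {N h k : ℕ} {p : ℕ → ℕ}

theorem IsPath.step_of_not_active (hp : IsPath e U N h p) (he : ∀ x, N ≤ x → ¬ e x) (x : ℕ) :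
    IsStep (e x) (p x) (p (x + 1)) := by
  rcases lt_or_ge x N with hx | hx
  · exact hp.step x hx
  · exact Or.inr ⟨he x hx, by rw [hp.eq_of_le x hx, hp.eq_of_le (x + 1) (by omega)]⟩

theorem IsPath.mem_of_eq (hp : IsPath e U N h p) (hU : ∀ x, N ≤ x → U x = U N) (x : ℕ) :
    p x ∈ U x := by
  rcases le_total x N with hx | hx
  · exact hp.mem x hx
  · rw [hU x hx, hp.eq_of_le x hx, ← hp.eq_of_le N le_rfl]
    exact hp.mem N le_rfl

theorem IsPath.le_self (hp : IsPath e U N h p) {x : ℕ} (hx : x ≤ N) : p x ≤ x := by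
  induction x with
  | zero => exact hp.zero.le
  | succ x ih =>
    have hstep := hp.step x hx
    have := ih (by omega)
    unfold IsStep at hstep
    omega

instance finite_paths : Finite {p // IsPath e U N h p} := by
  refine Finite.of_injective
    (β := Fin (N + 1) → Fin (N + 1))
    (fun p x ↦ ⟨p.1 x, Nat.lt_succ_of_le ((p.2.le_self (by omega)).trans (by omega))⟩) ?_
  rintro ⟨p, hp⟩ ⟨q, hq⟩ hpq
  ext x
  rcases le_total x N with hx | hx
  · exact congrArg Fin.val (congrFun hpq ⟨x, by omega⟩)
  · exact (hp.eq_of_le x hx).trans (hq.eq_of_le x hx).symm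

theorem IsPath.truncate (hp : IsPath e U (N + 1) h p) :
    IsPath e U N (p N) (fun x ↦ p (min x N)) where
  zero := by simpa using hp.zero
  step x hx := by
    simpa [min_eq_left hx.le, min_eq_left (Nat.succ_le_of_lt hx)] using hp.step x (by omega)
  mem x hx := by simpa [min_eq_left hx] using hp.mem x (by omega)
  eq_of_le x hx := by simp [min_eq_right hx]

theorem IsPath.extend (hp : IsPath e U N k p) (hh : h ∈ U (N + 1)) (hk : IsStep (e N) k h) :
    IsPath e U (N + 1) h (fun x ↦ if x ≤ N then p x else h) where
  zero := by simpa using hp.zero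
  step x hx := by
    rcases Nat.lt_succ_iff_lt_or_eq.1 hx with hx | rfl
    · simpa [hx.le, Nat.succ_le_of_lt hx] using hp.step x hx
    · simpa [hp.eq_of_le x le_rfl] using hk
  mem x hx := by
    rcases Nat.le_succ_iff.1 hx with hx | rfl
    · simpa [hx] using hp.mem x hx
    · simpa using hh
  eq_of_le x hx := if_neg (by omega)

/-- Deleting the last step of a path. -/
def pathSuccEquiv (hh : h ∈ U (N + 1)) :
    {p // IsPath e U (N + 1) h p} ≃ {p // ∃ k, IsStep (e N) k h ∧ IsPath e U N k p} where
  toFun p := ⟨fun x ↦ p.1 (min x N), p.1 N,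
    by simpa [p.2.eq_of_le (N + 1) le_rfl] using p.2.step N (by omega), p.2.truncate⟩
  invFun p := ⟨fun x ↦ if x ≤ N then p.1 x else h,
    let ⟨_, hk, hp⟩ := p.2; hp.extend hh hk⟩
  left_inv := by
    rintro ⟨p, hp⟩
    ext x
    by_cases hx : x ≤ N
    · simp [hx]
    · simp [hx, hp.eq_of_le x (by omega)]
  right_inv := by
    rintro ⟨p, k, hk, hp⟩
    ext x
    rcases le_total x N with hx | hx
    · simp [hx]
    · simp [hx, hp.eq_of_le]

theorem numPaths_eq_zero (hp : ∀ p, ¬ IsPath e U N h p) : numPaths e U N h = 0 := by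
  have : IsEmpty {p // IsPath e U N h p} := ⟨fun p ↦ hp p.1 p.2⟩
  exact Nat.card_of_isEmpty

theorem numPaths_zero_succ : numPaths e U 0 (h + 1) = 0 :=
  numPaths_eq_zero fun _ hp ↦ by
    have := hp.eq_of_le 0 le_rfl
    have := hp.zero
    omega

theorem numPaths_succ_of_notMem (hh : h ∉ U (N + 1)) : numPaths e U (N + 1) h = 0 :=
  numPaths_eq_zero fun _ hp ↦ hh (hp.eq_of_le (N + 1) le_rfl ▸ hp.mem (N + 1) le_rfl)

theorem numPaths_succ_of_not (hh : h ∈ U (N + 1)) (he : ¬ e N) :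
    numPaths e U (N + 1) h = numPaths e U N h :=
  Nat.card_congr <| (pathSuccEquiv hh).trans <| Equiv.subtypeEquivRight fun _ ↦ by
    simp [IsStep, he]

theorem numPaths_succ_zero (hh : 0 ∈ U (N + 1)) (he : e N) :
    numPaths e U (N + 1) 0 = numPaths e U N 1 :=
  Nat.card_congr <| (pathSuccEquiv hh).trans <| Equiv.subtypeEquivRight fun _ ↦ by
    simp [IsStep, he]

theorem numPaths_succ_succ (hh : h + 1 ∈ U (N + 1)) (he : e N) :
    numPaths e U (N + 1) (h + 1) = numPaths e U N (h + 2) + numPaths e U N h := by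
  classical
  have hdisj : Disjoint (IsPath e U N (h + 2)) (IsPath e U N h) := by
    refine Pi.disjoint_iff.2 fun p ↦ Prop.disjoint_iff.2 ?_
    by_contra! hp
    have := hp.1.eq_of_le N le_rfl
    have := hp.2.eq_of_le N le_rfl
    omega
  have hlast (p : ℕ → ℕ) : (∃ k, IsStep (e N) k (h + 1) ∧ IsPath e U N k p) ↔
      IsPath e U N (h + 2) p ∨ IsPath e U N h p := by
    simp only [IsStep, he, true_and, not_true_eq_false, false_and, or_false, add_left_inj,
      or_and_right, exists_or, exists_eq_left, exists_eq_left']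
    exact or_comm
  rw [numPaths, numPaths, numPaths, ← Nat.card_sum]
  exact Nat.card_congr <| (pathSuccEquiv hh).trans <|
    (Equiv.subtypeEquivRight hlast).trans (subtypeOrEquiv _ _ hdisj)

/-- The boundary of the region cuts off high end points more than low ones: the ratio of the number
of paths in the region to the number of unrestricted ones decreases with the end point. -/
theorem numPaths_mul_ballot_le [DecidablePred e] (hU : ∀ x, IsLowerSet (U x)) (N : ℕ) :
    ∀ h k, h ≤ k → h % 2 = k % 2 → numPaths e U N k * ballot (N.count e) h ≤
      numPaths e U N h * ballot (N.count e) k := by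
  induction N with
  | zero =>
    rintro h (_ | k) hhk -
    · rw [Nat.le_zero.1 hhk]
    · simp [numPaths_zero_succ]
  | succ N ih =>
    intro h k hhk hpar
    by_cases hk : k ∈ U (N + 1)
    swap
    · simp [numPaths_succ_of_notMem hk]
    have hh : h ∈ U (N + 1) := hU _ hhk hk
    by_cases he : e N
    swap
    · simpa [numPaths_succ_of_not hh he, numPaths_succ_of_not hk he, Nat.count_succ, he]
        using ih h k hhk hpar
    rw [Nat.count_succ, if_pos he]
    rcases hhk.eq_or_lt with rfl | hlt
    · exact le_rfl
    match h, k with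
    | 0, k + 1 =>
      rw [numPaths_succ_zero hh he, numPaths_succ_succ hk he, ballot, ballot]
      linarith [ih 1 (k + 2) (by omega) (by omega), ih 1 k (by omega) (by omega)]
    | h + 1, k + 1 =>
      rw [numPaths_succ_succ hh he, numPaths_succ_succ hk he, ballot, ballot]
      linarith [ih (h + 2) (k + 2) (by omega) (by omega), ih (h + 2) k (by omega) (by omega),
        ih h (k + 2) (by omega) (by omega), ih h k (by omega) (by omega)]

theorem numPaths_add_two_le [DecidablePred e] (hU : ∀ x, IsLowerSet (U x)) {M : ℕ}
    (hcount : N.count e = 2 * M + (h + 2)) (hM : 2 * M ≤ h * (h + 3)) :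
    numPaths e U N (h + 2) ≤ numPaths e U N h := by
  refine le_of_mul_le_mul_right ?_ (ballot_pos hcount)
  calc numPaths e U N (h + 2) * ballot (N.count e) (h + 2)
    _ ≤ numPaths e U N (h + 2) * ballot (N.count e) h :=
      Nat.mul_le_mul_left _ (ballot_add_two_le hcount hM)
    _ ≤ numPaths e U N h * ballot (N.count e) (h + 2) :=
      numPaths_mul_ballot_le hU N h (h + 2) (by omega) (by omega)

end Paths

/-! ### Tableaux as chains of column lengths -/

section Chains

variable {l ν : List ℕ} {T : ℕ → ℕ → ℕ} {h : ℕ → ℕ → ℕ} {W : ℕ}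

/-- The `(j+1)`-st part of the conjugate partition of `l` is `a`. -/
def HasColLength (l : List ℕ) (j a : ℕ) : Prop := ∀ i, j < l.getD i 0 ↔ i < a

theorem HasColLength.unique {j a b : ℕ} (ha : HasColLength l j a) (hb : HasColLength l j b) :
    a = b :=
  eq_of_forall_lt_iff fun i ↦ (ha i).symm.trans (hb i)

/-- A semistandard tableau of shape `l` and content `ν`, encoded by the column lengths `h x j` of
the shapes formed by its entries smaller than `x`: consecutive shapes differ by a horizontal strip,
that is, each column grows by at most one cell. Only the first `W` columns are counted. -/
structure IsStripChain (W : ℕ) (l ν : List ℕ) (h : ℕ → ℕ → ℕ) : Prop where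
  zero : ∀ j, h 0 j = 0
  anti : ∀ x j, h x (j + 1) ≤ h x j
  le_succ : ∀ x j, h x j ≤ h (x + 1) j
  succ_le : ∀ x j, h (x + 1) j ≤ h x j + 1
  final : ∀ x, ν.length ≤ x → ∀ j, HasColLength l j (h x j)
  sum_eq : ∀ x, ∑ j ∈ range W, h x j = ∑ k ∈ range x, ν.getD k 0

/-- The column lengths of the shapes formed by the entries of `T` smaller than `x`. -/
def columnChain (l : List ℕ) (T : ℕ → ℕ → ℕ) (x j : ℕ) : ℕ :=
  l.length.count fun i ↦ j < l.getD i 0 ∧ T i j < x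

/-- The tableau with a given chain of column lengths. -/
noncomputable def chainTableau (l : List ℕ) (h : ℕ → ℕ → ℕ) (i j : ℕ) : ℕ :=
  if j < l.getD i 0 then sInf {x | i < h (x + 1) j} else 0

theorem lt_length_of_lt_getD {i j : ℕ} (hij : j < l.getD i 0) : i < l.length := by
  by_contra! hi
  rw [List.getD_eq_default _ _ hi] at hij
  exact Nat.not_lt_zero j hij

theorem lt_count_iff_of_antitone {p : ℕ → Prop} [DecidablePred p] {n i : ℕ}
    (hp : ∀ i, p (i + 1) → p i) (hn : ∀ i, p i → i < n) : i < n.count p ↔ p i := by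
  have hanti : ∀ ⦃i k⦄, i ≤ k → p k → p i := fun i k hik ↦ by
    induction k, hik using Nat.le_induction with
    | base => exact id
    | succ k _ ih => exact fun hk ↦ ih (hp k hk)
  constructor
  · intro hi
    by_contra hpi
    rw [Nat.count_eq_card_filter_range] at hi
    have hsub : (range n).filter p ⊆ range i := fun k hk ↦ by
      have hk := (mem_filter.1 hk).2
      exact mem_range.2 (not_le.1 fun hik ↦ hpi (hanti hik hk))
    exact hi.not_ge ((card_le_card hsub).trans (card_range i).le)
  · intro hi
    have hcount : Nat.count p (i + 1) = i + 1 :=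
      Nat.count_iff_forall.2 fun k hk ↦ hanti (Nat.lt_succ_iff.1 hk) hi
    exact Nat.lt_of_succ_le (hcount.ge.trans (Nat.count_monotone p (hn i hi)))

theorem IsSSYT.lt_columnChain_iff (hl : Antitone fun i ↦ l.getD i 0) (hT : IsSSYT l T)
    {i j x : ℕ} : i < columnChain l T x j ↔ j < l.getD i 0 ∧ T i j < x :=
  lt_count_iff_of_antitone
    (fun i hi ↦ ⟨hi.1.trans_le (hl i.le_succ), (hT.2.1 i (i + 1) j i.lt_succ_self hi.1).trans hi.2⟩)
    fun _ hi ↦ lt_length_of_lt_getD hi.1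

theorem card_cells (hW : ∀ i, l.getD i 0 ≤ W) (p : ℕ → ℕ → Prop) [∀ i j, Decidable (p i j)] :
    Nat.card {c : ℕ × ℕ // c.2 < l.getD c.1 0 ∧ p c.1 c.2} =
      ∑ j ∈ range W, l.length.count fun i ↦ j < l.getD i 0 ∧ p i j := by
  rw [Nat.subtype_card ((range l.length ×ˢ range W).filter
    fun c ↦ c.2 < l.getD c.1 0 ∧ p c.1 c.2), card_filter, sum_product_right]
  · simp only [Nat.count_eq_card_filter_range, card_filter]
  · intro c
    simp only [mem_filter, mem_product, mem_range, and_iff_right_iff_imp]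
    exact fun hc ↦ ⟨lt_length_of_lt_getD hc.1, hc.1.trans_le (hW c.1)⟩

theorem columnChain_zero (l : List ℕ) (T : ℕ → ℕ → ℕ) (j : ℕ) : columnChain l T 0 j = 0 := by
  simp [columnChain]

theorem sum_columnChain_succ (hW : ∀ i, l.getD i 0 ≤ W) (T : ℕ → ℕ → ℕ) (x : ℕ) :
    ∑ j ∈ range W, columnChain l T (x + 1) j = ∑ j ∈ range W, columnChain l T x j +
      Nat.card {c : ℕ × ℕ // c.2 < l.getD c.1 0 ∧ T c.1 c.2 = x} := by
  rw [card_cells hW fun i j ↦ T i j = x, ← sum_add_distrib]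
  refine sum_congr rfl fun j _ ↦ ?_
  simp only [columnChain, Nat.count_eq_card_filter_range]
  rw [← card_union_of_disjoint (disjoint_filter.2 fun i _ hlt heq ↦ hlt.2.ne heq.2), ← filter_or]
  simp only [← and_or_left, Nat.lt_succ_iff_lt_or_eq]

theorem hasContent_iff (hW : ∀ i, l.getD i 0 ≤ W) : HasContent l T ν ↔
    ∀ x, ∑ j ∈ range W, columnChain l T x j = ∑ k ∈ range x, ν.getD k 0 := by
  constructor
  · intro hν x
    induction x with
    | zero => simp [columnChain_zero]
    | succ x ih => rw [sum_columnChain_succ hW, sum_range_succ, ih, hν x]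
  · intro hsum x
    have hx := hsum (x + 1)
    rw [sum_columnChain_succ hW, sum_range_succ, hsum x] at hx
    exact Nat.add_left_cancel hx

theorem getD_le_sum (l : List ℕ) (i : ℕ) : l.getD i 0 ≤ l.sum := by
  rcases lt_or_ge i l.length with hi | hi
  · rw [List.getD_eq_getElem _ _ hi]
    exact List.single_le_sum (fun _ _ ↦ Nat.zero_le _) _ (List.getElem_mem hi)
  · rw [List.getD_eq_default _ _ hi]
    exact Nat.zero_le _

theorem HasContent.lt_length (hν : HasContent l T ν) {i j : ℕ} (hij : j < l.getD i 0) :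
    T i j < ν.length := by
  by_contra! hT
  have hcard := hν (T i j)
  rw [List.getD_eq_default _ _ hT, card_cells (getD_le_sum l) fun i' j' ↦ T i' j' = T i j,
    sum_eq_zero_iff] at hcard
  have hcount := hcard j (mem_range.2 (hij.trans_le (getD_le_sum l i)))
  rw [Nat.count_eq_card_filter_range, card_eq_zero] at hcount
  exact notMem_empty i (hcount ▸ mem_filter.2 ⟨mem_range.2 (lt_length_of_lt_getD hij), hij, rfl⟩)

theorem isStripChain_columnChain (hW : ∀ i, l.getD i 0 ≤ W) (hl : Antitone fun i ↦ l.getD i 0)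
    (hT : IsSSYT l T) (hν : HasContent l T ν) : IsStripChain W l ν (columnChain l T) where
  zero := columnChain_zero l T
  anti x j := le_of_forall_lt fun i hi ↦ by
    rw [hT.lt_columnChain_iff hl] at hi ⊢
    exact ⟨(Nat.lt_succ_self j).trans hi.1, (hT.1 i j (j + 1) j.le_succ hi.1).trans_lt hi.2⟩
  le_succ x j := le_of_forall_lt fun i hi ↦ by
    rw [hT.lt_columnChain_iff hl] at hi ⊢
    exact ⟨hi.1, hi.2.trans (Nat.lt_succ_self x)⟩
  succ_le x j := by
    by_contra! hlt
    have htop := (hT.lt_columnChain_iff hl).1 hlt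
    have hbelow : columnChain l T x j < columnChain l T x j :=
      (hT.lt_columnChain_iff hl).2 ⟨htop.1.trans_le (hl (Nat.le_succ _)),
        (hT.2.1 _ _ j (Nat.lt_succ_self _) htop.1).trans_le (Nat.lt_succ_iff.1 htop.2)⟩
    exact hbelow.false
  final x hx j i := by
    rw [hT.lt_columnChain_iff hl]
    exact ⟨fun hij ↦ ⟨hij, (hν.lt_length hij).trans_le hx⟩, And.left⟩
  sum_eq := (hasContent_iff hW).1 hν

theorem IsStripChain.monotone (hh : IsStripChain W l ν h) (j : ℕ) : Monotone fun x ↦ h x j :=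
  monotone_nat_of_le_succ fun x ↦ hh.le_succ x j

theorem IsStripChain.lt_getD (hh : IsStripChain W l ν h) {i j x : ℕ} (hi : i < h x j) :
    j < l.getD i 0 :=
  (hh.final _ (le_max_right x _) j i).2 (hi.trans_le (hh.monotone j (le_max_left _ _)))

theorem IsStripChain.chainTableau_lt_iff (hh : IsStripChain W l ν h) {i j x : ℕ}
    (hij : j < l.getD i 0) : chainTableau l h i j < x ↔ i < h x j := by
  rw [chainTableau, if_pos hij]
  constructor
  · intro hx
    have hne : {x | i < h (x + 1) j}.Nonempty :=
      ⟨ν.length, (hh.final _ (Nat.le_succ _) j i).1 hij⟩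
    exact (Nat.sInf_mem hne).trans_le (hh.monotone j hx)
  · intro hi
    obtain _ | x := x
    · simp [hh.zero] at hi
    · exact Nat.lt_succ_of_le (Nat.sInf_le hi)

theorem IsStripChain.isSSYT (hl : Antitone fun i ↦ l.getD i 0) (hh : IsStripChain W l ν h) :
    IsSSYT l (chainTableau l h) := by
  refine ⟨fun i j₁ j₂ hj hij ↦ ?_, fun i₁ i₂ j hi hij ↦ ?_, fun i j hij ↦ if_neg hij.not_gt⟩
  · refine Nat.lt_succ_iff.1 ((hh.chainTableau_lt_iff (hj.trans_lt hij)).2 ?_)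
    exact ((hh.chainTableau_lt_iff hij).1 (Nat.lt_succ_self _)).trans_le
      (antitone_nat_of_succ_le (hh.anti _) hj)
  · refine (hh.chainTableau_lt_iff (hij.trans_le (hl hi.le))).2 ?_
    have hlt := (hh.chainTableau_lt_iff hij).1 (Nat.lt_succ_self _)
    exact hi.trans_le (Nat.lt_succ_iff.1 (hlt.trans_le (hh.succ_le _ j)))

theorem columnChain_chainTableau (hl : Antitone fun i ↦ l.getD i 0) (hh : IsStripChain W l ν h) :
    columnChain l (chainTableau l h) = h := by
  ext x j
  refine eq_of_forall_lt_iff fun i ↦ ((hh.isSSYT hl).lt_columnChain_iff hl).trans ⟨?_, ?_⟩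
  · exact fun hi ↦ (hh.chainTableau_lt_iff hi.1).1 hi.2
  · exact fun hi ↦ ⟨hh.lt_getD hi, (hh.chainTableau_lt_iff (hh.lt_getD hi)).2 hi⟩

theorem chainTableau_columnChain (hl : Antitone fun i ↦ l.getD i 0) (hT : IsSSYT l T)
    (hν : HasContent l T ν) : chainTableau l (columnChain l T) = T := by
  have hh := isStripChain_columnChain (getD_le_sum l) hl hT hν
  ext i j
  by_cases hij : j < l.getD i 0
  · refine eq_of_forall_gt_iff fun x ↦ ?_
    rw [hh.chainTableau_lt_iff hij, hT.lt_columnChain_iff hl, and_iff_right hij]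
  · rw [chainTableau, if_neg hij, hT.2.2 i j (not_lt.1 hij)]

/-- Semistandard tableaux are chains of column lengths. -/
noncomputable def tableauEquivStripChain (ν : List ℕ) (hW : ∀ i, l.getD i 0 ≤ W)
    (hl : Antitone fun i ↦ l.getD i 0) :
    {T // IsSSYT l T ∧ HasContent l T ν} ≃ {h // IsStripChain W l ν h} where
  toFun T := ⟨columnChain l T.1, isStripChain_columnChain hW hl T.2.1 T.2.2⟩
  invFun h := ⟨chainTableau l h.1, h.2.isSSYT hl, (hasContent_iff hW).2 <| by
    rw [columnChain_chainTableau hl h.2]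
    exact h.2.sum_eq⟩
  left_inv T := Subtype.ext (chainTableau_columnChain hl T.2.1 T.2.2)
  right_inv h := Subtype.ext (columnChain_chainTableau hl h.2)

theorem kostka_eq_card_stripChain (ν : List ℕ) (hW : ∀ i, l.getD i 0 ≤ W)
    (hl : Antitone fun i ↦ l.getD i 0) : kostka l ν = Nat.card {h // IsStripChain W l ν h} :=
  Nat.card_congr (tableauEquivStripChain ν hW hl)

instance finite_tableaux : Finite {T // IsSSYT l T ∧ HasContent l T ν} := by
  refine Finite.of_injective (β := Fin l.length → Fin l.sum → Fin (ν.length + 1))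
    (fun T i j ↦ ⟨T.1 i j, ?_⟩) ?_
  · by_cases hij : j < l.getD i 0
    · exact (T.2.2.lt_length hij).trans (Nat.lt_succ_self _)
    · simp [T.2.1.2.2 i j (not_lt.1 hij)]
  · rintro ⟨T, hT, _⟩ ⟨S, hS, _⟩ hTS
    ext i j
    by_cases hij : j < l.getD i 0
    · exact congrArg Fin.val (congrFun (congrFun hTS ⟨i, lt_length_of_lt_getD hij⟩)
        ⟨j, hij.trans_le (getD_le_sum l i)⟩)
    · exact (hT.2.2 i j (not_lt.1 hij)).trans (hS.2.2 i j (not_lt.1 hij)).symm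

end Chains

/-! ### Changing two adjacent columns -/

section AdjacentColumns

variable {l m ν : List ℕ} {W d a k a' k' : ℕ} {h g B : ℕ → ℕ → ℕ} {p : ℕ → ℕ}

/-- The chain of column lengths with columns `d` and `d + 1` replaced by their sum, which is put in
column `d`. -/
def mergeCols (d : ℕ) (h : ℕ → ℕ → ℕ) (x j : ℕ) : ℕ :=
  if j = d then h x d + h x (d + 1) else if j = d + 1 then 0 else h x j

/-- The difference of the lengths of columns `d` and `d + 1` of a chain of column lengths. -/
def colDiff (d : ℕ) (h : ℕ → ℕ → ℕ) (x : ℕ) : ℕ := h x d - h x (d + 1)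

/-- The chain with merged columns `B` and difference `p` between columns `d` and `d + 1`. -/
def splitCols (d : ℕ) (B : ℕ → ℕ → ℕ) (p : ℕ → ℕ) (x j : ℕ) : ℕ :=
  if j = d then (B x d + p x) / 2 else if j = d + 1 then (B x d - p x) / 2 else B x j

/-- The merged column grows by exactly one cell at time `x`, so that exactly one of the two columns
grows. -/
def IsActive (d : ℕ) (B : ℕ → ℕ → ℕ) (x : ℕ) : Prop := B (x + 1) d = B x d + 1

/-- The differences `k` between columns `d` and `d + 1` for which these fit between the neighbouring
columns `d - 1` and `d + 2` (the condition on column `d - 1` is void for `d = 0`). -/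
def diffRegion (d : ℕ) (B : ℕ → ℕ → ℕ) (x : ℕ) : Set ℕ :=
  {k | k + 2 * B x (d + 2) ≤ B x d ∧ ∀ j, j + 1 = d → B x d + k ≤ 2 * B x j}

theorem isLowerSet_diffRegion (d : ℕ) (B : ℕ → ℕ → ℕ) (x : ℕ) : IsLowerSet (diffRegion d B x) :=
  fun _ _ hle hk ↦ ⟨by grind [hk.1], fun j hj ↦ by grind [hk.2 j hj]⟩

theorem mergeCols_self (d : ℕ) (h : ℕ → ℕ → ℕ) (x : ℕ) :
    mergeCols d h x d = h x d + h x (d + 1) :=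
  if_pos rfl

theorem mergeCols_of_ne {j : ℕ} (h : ℕ → ℕ → ℕ) (x : ℕ) (hj : j ≠ d) (hj' : j ≠ d + 1) :
    mergeCols d h x j = h x j := by
  rw [mergeCols, if_neg hj, if_neg hj']

theorem sum_mergeCols (h : ℕ → ℕ → ℕ) (hd : d + 1 < W) (x : ℕ) :
    ∑ j ∈ range W, mergeCols d h x j = ∑ j ∈ range W, h x j := by
  have hmem : d + 1 ∈ (range W).erase d := mem_erase.2 ⟨by omega, mem_range.2 hd⟩
  rw [← add_sum_erase _ _ (mem_range.2 (show d < W by omega)), ← add_sum_erase _ _ hmem,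
    ← add_sum_erase (range W) (h x) (mem_range.2 (show d < W by omega)),
    ← add_sum_erase _ (h x) hmem, sum_congr rfl fun j hj ↦ mergeCols_of_ne h x
      (mem_erase.1 (mem_erase.1 hj).2).1 (mem_erase.1 hj).1]
  simp only [mergeCols, if_pos, Nat.succ_ne_self, if_false]
  ring

theorem IsStripChain.eq_of_le (hh : IsStripChain W l ν h) {x : ℕ} (hx : ν.length ≤ x) :
    h x = h ν.length :=
  funext fun j ↦ (hh.final x hx j).unique (hh.final _ le_rfl j)

theorem IsStripChain.mergeCols_eq_of_le (hh : IsStripChain W l ν h) {x : ℕ} (hx : ν.length ≤ x) :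
    mergeCols d h x = mergeCols d h ν.length := by
  funext j
  simp only [mergeCols, hh.eq_of_le hx]

theorem IsStripChain.not_isActive (hh : IsStripChain W l ν h) (x : ℕ) (hx : ν.length ≤ x) :
    ¬ IsActive d (mergeCols d h) x := by
  rw [IsActive, hh.mergeCols_eq_of_le hx, hh.mergeCols_eq_of_le (hx.trans x.le_succ)]
  omega

theorem IsStripChain.isPath_colDiff (hh : IsStripChain W l ν h) (hd : HasColLength l d (a + k))
    (hd' : HasColLength l (d + 1) a) :
    IsPath (IsActive d (mergeCols d h)) (diffRegion d (mergeCols d h)) ν.length k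
      (colDiff d h) where
  zero := by simp [colDiff, hh.zero]
  step x _ := by
    have := hh.anti x d
    have := hh.anti (x + 1) d
    have := hh.le_succ x d
    have := hh.le_succ x (d + 1)
    have := hh.succ_le x d
    have := hh.succ_le x (d + 1)
    simp only [IsStep, IsActive, colDiff, mergeCols_self]
    omega
  mem x _ := by
    have hdiff := hh.anti x d
    have hright : h x (d + 2) ≤ h x (d + 1) := hh.anti x (d + 1)
    constructor
    · rw [mergeCols_self, mergeCols_of_ne h x (by omega) (by omega), colDiff]
      omega
    · rintro j rfl
      have hleft := hh.anti x j
      rw [mergeCols_self, mergeCols_of_ne h x (by omega) (by omega), colDiff]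
      omega
  eq_of_le x hx := by
    rw [colDiff, (hh.final x hx d).unique hd, (hh.final x hx (d + 1)).unique hd']
    omega

theorem IsStripChain.eq_of_mergeCols_eq (hh : IsStripChain W l ν h) (hg : IsStripChain W m ν g)
    (hmerge : mergeCols d h = mergeCols d g) (hdiff : colDiff d h = colDiff d g) : h = g := by
  ext x j
  have hsum := congrFun (congrFun hmerge x) d
  have hsub := congrFun hdiff x
  have := hh.anti x d
  have := hg.anti x d
  rw [mergeCols_self, mergeCols_self] at hsum
  rw [colDiff, colDiff] at hsub
  by_cases hj : j = d
  · subst hj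
    omega
  by_cases hj' : j = d + 1
  · subst hj'
    omega
  · simpa only [mergeCols_of_ne _ x hj hj'] using congrFun (congrFun hmerge x) j

theorem IsStripChain.even_add_path (hh : IsStripChain W l ν h)
    (hp : IsPath (IsActive d (mergeCols d h)) (diffRegion d (mergeCols d h)) ν.length k p) (x : ℕ) :
    Even (mergeCols d h x d + p x) := by
  rw [Nat.even_iff]
  induction x with
  | zero => simp [mergeCols_self, hh.zero, hp.zero]
  | succ x ih =>
    have hstep := hp.step_of_not_active hh.not_isActive x
    have := hh.le_succ x d
    have := hh.le_succ x (d + 1)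
    have := hh.succ_le x d
    have := hh.succ_le x (d + 1)
    simp only [IsStep, IsActive, mergeCols_self] at hstep ih ⊢
    omega

theorem IsStripChain.path_mem_diffRegion (hh : IsStripChain W l ν h)
    (hp : IsPath (IsActive d (mergeCols d h)) (diffRegion d (mergeCols d h)) ν.length k p) (x : ℕ) :
    p x ∈ diffRegion d (mergeCols d h) x :=
  hp.mem_of_eq (fun x hx ↦ by simp only [diffRegion, hh.mergeCols_eq_of_le hx]) x

theorem splitCols_self (d : ℕ) (B : ℕ → ℕ → ℕ) (p : ℕ → ℕ) (x : ℕ) :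
    splitCols d B p x d = (B x d + p x) / 2 :=
  if_pos rfl

theorem splitCols_succ (d : ℕ) (B : ℕ → ℕ → ℕ) (p : ℕ → ℕ) (x : ℕ) :
    splitCols d B p x (d + 1) = (B x d - p x) / 2 := by
  simp [splitCols]

theorem splitCols_of_ne {j : ℕ} (B : ℕ → ℕ → ℕ) (p : ℕ → ℕ) (x : ℕ) (hj : j ≠ d)
    (hj' : j ≠ d + 1) : splitCols d B p x j = B x j := by
  rw [splitCols, if_neg hj, if_neg hj']

theorem IsStripChain.mergeCols_splitCols (hh : IsStripChain W l ν h)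
    (hp : IsPath (IsActive d (mergeCols d h)) (diffRegion d (mergeCols d h)) ν.length k p) :
    mergeCols d (splitCols d (mergeCols d h) p) = mergeCols d h := by
  ext x j
  by_cases hj : j = d
  · subst hj
    have := Nat.even_iff.1 (hh.even_add_path hp x)
    have := (hh.path_mem_diffRegion hp x).1
    rw [mergeCols_self, splitCols_self, splitCols_succ]
    omega
  by_cases hj' : j = d + 1
  · simp [mergeCols, hj']
  · rw [mergeCols_of_ne _ x hj hj', splitCols_of_ne _ p x hj hj']

theorem IsStripChain.colDiff_splitCols (hh : IsStripChain W l ν h)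
    (hp : IsPath (IsActive d (mergeCols d h)) (diffRegion d (mergeCols d h)) ν.length k p) :
    colDiff d (splitCols d (mergeCols d h) p) = p := by
  ext x
  have := Nat.even_iff.1 (hh.even_add_path hp x)
  have := (hh.path_mem_diffRegion hp x).1
  rw [colDiff, splitCols_self, splitCols_succ]
  omega

theorem IsStripChain.splitCols_succ_le (hh : IsStripChain W l ν h)
    (hp : IsPath (IsActive d (mergeCols d h)) (diffRegion d (mergeCols d h)) ν.length k p)
    (x j : ℕ) : splitCols d (mergeCols d h) p x (j + 1) ≤ splitCols d (mergeCols d h) p x j := by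
  have hmem := hh.path_mem_diffRegion hp x
  by_cases hj : j = d
  · subst hj
    rw [splitCols_self, splitCols_succ]
    omega
  by_cases hj' : j = d + 1
  · subst hj'
    rw [splitCols_succ, splitCols_of_ne _ p x (by omega) (by omega)]
    have : p x + 2 * mergeCols d h x (d + 1 + 1) ≤ mergeCols d h x d := hmem.1
    omega
  rw [splitCols_of_ne _ p x hj hj']
  by_cases hleft : j + 1 = d
  · have := hmem.2 j hleft
    rw [hleft, splitCols_self]
    omega
  · rw [splitCols_of_ne _ p x hleft (by omega), mergeCols_of_ne h x hj hj',
      mergeCols_of_ne h x hleft (by omega)]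
    exact hh.anti x j

theorem IsStripChain.splitCols_le_succ (hh : IsStripChain W l ν h)
    (hp : IsPath (IsActive d (mergeCols d h)) (diffRegion d (mergeCols d h)) ν.length k p)
    (x j : ℕ) : splitCols d (mergeCols d h) p x j ≤ splitCols d (mergeCols d h) p (x + 1) j ∧
      splitCols d (mergeCols d h) p (x + 1) j ≤ splitCols d (mergeCols d h) p x j + 1 := by
  by_cases hout : j = d ∨ j = d + 1
  · have hstep := hp.step_of_not_active hh.not_isActive x
    have := Nat.even_iff.1 (hh.even_add_path hp x)
    have := (hh.path_mem_diffRegion hp x).1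
    have := (hh.path_mem_diffRegion hp (x + 1)).1
    have := hh.le_succ x d
    have := hh.le_succ x (d + 1)
    have := hh.succ_le x d
    have := hh.succ_le x (d + 1)
    rcases hout with rfl | rfl
    all_goals
      simp only [IsStep, IsActive, splitCols_self, splitCols_succ, mergeCols_self] at *
      omega
  · rw [not_or] at hout
    rw [splitCols_of_ne _ p _ hout.1 hout.2, splitCols_of_ne _ p _ hout.1 hout.2,
      mergeCols_of_ne h _ hout.1 hout.2, mergeCols_of_ne h _ hout.1 hout.2]
    exact ⟨hh.le_succ x j, hh.succ_le x j⟩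

theorem IsStripChain.isStripChain_splitCols (hh : IsStripChain W l ν h) (hW : d + 1 < W)
    (hd : HasColLength l d (a + k)) (hd' : HasColLength l (d + 1) a)
    (hm : HasColLength m d (a' + k')) (hm' : HasColLength m (d + 1) a')
    (hsum : 2 * a' + k' = 2 * a + k)
    (hrest : ∀ j c, j ≠ d → j ≠ d + 1 → HasColLength l j c → HasColLength m j c)
    (hp : IsPath (IsActive d (mergeCols d h)) (diffRegion d (mergeCols d h)) ν.length k' p) :
    IsStripChain W m ν (splitCols d (mergeCols d h) p) where
  zero j := by simp [splitCols, mergeCols, hh.zero, hp.zero]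
  anti := hh.splitCols_succ_le hp
  le_succ x j := (hh.splitCols_le_succ hp x j).1
  succ_le x j := (hh.splitCols_le_succ hp x j).2
  final x hx j := by
    have hmerged : mergeCols d h x d = 2 * a' + k' := by
      rw [mergeCols_self, (hh.final x hx d).unique hd, (hh.final x hx (d + 1)).unique hd']
      omega
    by_cases hj : j = d
    · subst hj
      rwa [splitCols_self, hmerged, hp.eq_of_le x hx,
        show (2 * a' + k' + k') / 2 = a' + k' by omega]
    by_cases hj' : j = d + 1
    · subst hj'
      rwa [splitCols_succ, hmerged, hp.eq_of_le x hx, show (2 * a' + k' - k') / 2 = a' by omega]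
    · rw [splitCols_of_ne _ p x hj hj', mergeCols_of_ne h x hj hj']
      exact hrest j _ hj hj' (hh.final x hx j)
  sum_eq x := by
    rw [← sum_mergeCols _ hW, hh.mergeCols_splitCols hp, sum_mergeCols h hW]
    exact hh.sum_eq x

theorem IsStripChain.exists_count_add_two_mul (hh : IsStripChain W l ν h)
    [DecidablePred (IsActive d (mergeCols d h))] (x : ℕ) :
    ∃ i ≤ h x (d + 1), h x d + h x (d + 1) = x.count (IsActive d (mergeCols d h)) + 2 * i := by
  induction x with
  | zero => exact ⟨0, Nat.zero_le _, by simp [hh.zero]⟩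
  | succ x ih =>
    obtain ⟨i, hi, hsum⟩ := ih
    have := hh.le_succ x d
    have := hh.le_succ x (d + 1)
    have := hh.succ_le x d
    have := hh.succ_le x (d + 1)
    rw [Nat.count_succ]
    simp only [IsActive, mergeCols_self] at hsum ⊢
    by_cases hboth : h (x + 1) d + h (x + 1) (d + 1) = h x d + h x (d + 1) + 2
    · exact ⟨i + 1, by omega, by split_ifs <;> omega⟩
    · exact ⟨i, by omega, by split_ifs <;> omega⟩

theorem card_mergeCols_fiber_le (hd : HasColLength l d (a + k)) (hd' : HasColLength l (d + 1) a) :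
    Nat.card {h : {h // IsStripChain W l ν h} // mergeCols d h.1 = B} ≤
      numPaths (IsActive d B) (diffRegion d B) ν.length k := by
  refine Nat.card_le_card_of_injective
    (fun h ↦ ⟨colDiff d h.1.1, by simpa only [h.2] using h.1.2.isPath_colDiff hd hd'⟩) ?_
  rintro ⟨⟨h, hh⟩, rfl⟩ ⟨⟨g, hg⟩, hgh⟩ hdiff
  exact Subtype.ext <| Subtype.ext <|
    hh.eq_of_mergeCols_eq hg hgh.symm (congrArg Subtype.val hdiff)

theorem IsStripChain.numPaths_le_card_mergeCols_fiber (hh : IsStripChain W l ν h)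
    [Finite {g // IsStripChain W m ν g}] (hW : d + 1 < W)
    (hd : HasColLength l d (a + k)) (hd' : HasColLength l (d + 1) a)
    (hm : HasColLength m d (a' + k')) (hm' : HasColLength m (d + 1) a')
    (hsum : 2 * a' + k' = 2 * a + k)
    (hrest : ∀ j c, j ≠ d → j ≠ d + 1 → HasColLength l j c → HasColLength m j c) :
    numPaths (IsActive d (mergeCols d h)) (diffRegion d (mergeCols d h)) ν.length k' ≤
      Nat.card {g : {g // IsStripChain W m ν g} // mergeCols d g.1 = mergeCols d h} := by
  refine Nat.card_le_card_of_injective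
    (fun p ↦ ⟨⟨_, hh.isStripChain_splitCols hW hd hd' hm hm' hsum hrest p.2⟩,
      hh.mergeCols_splitCols p.2⟩) ?_
  rintro ⟨p, hp⟩ ⟨q, hq⟩ hpq
  have hsplit := congrArg (fun g ↦ colDiff d g.1.1) hpq
  exact Subtype.ext <|
    (hh.colDiff_splitCols hp).symm.trans (hsplit.trans (hh.colDiff_splitCols hq))

theorem card_le_card_of_card_fiber_le {X Y Z : Type*} [Finite X] [Finite Y] (f : X → Z) (f' : Y → Z)
    (hcard : ∀ x, Nat.card {x' // f x' = f x} ≤ Nat.card {y // f' y = f x}) :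
    Nat.card X ≤ Nat.card Y := by
  classical
  have := Fintype.ofFinite X
  have := Fintype.ofFinite Y
  simp only [Nat.card_eq_fintype_card, Fintype.card_subtype] at hcard ⊢
  calc Fintype.card X
    _ = ∑ z ∈ univ.image f, #{x | f x = z} :=
      card_eq_sum_card_fiberwise fun x _ ↦ mem_coe.2 (mem_image_of_mem f (mem_univ x))
    _ ≤ ∑ z ∈ univ.image f, #{y | f' y = z} := sum_le_sum fun z hz ↦ by
      obtain ⟨x, -, rfl⟩ := mem_image.1 hz
      exact hcard x
    _ ≤ Fintype.card Y :=
      (sum_card_fiberwise_eq_card_filter univ (univ.image f) f').trans_le (card_le_univ _)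

/-- The number of active steps is `2 * (a - i) + (b + 2)` for some `i ≤ a`, hence the hypothesis on
ballot numbers is `2 * (a - i) ≤ b * (b + 3)`. -/
theorem kostka_le_kostka_of_hasColLength {b : ℕ} (ν : List ℕ) (hl : Antitone fun i ↦ l.getD i 0)
    (hm : Antitone fun i ↦ m.getD i 0) (hld : HasColLength l d (a + (b + 2)))
    (hld' : HasColLength l (d + 1) a) (hmd : HasColLength m d (a + 1 + b))
    (hmd' : HasColLength m (d + 1) (a + 1))
    (hrest : ∀ j c, j ≠ d → j ≠ d + 1 → HasColLength l j c → HasColLength m j c)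
    (hab : 2 * a ≤ b * (b + 3)) : kostka l ν ≤ kostka m ν := by
  classical
  obtain ⟨W, hlW, hmW⟩ : ∃ W, (∀ i, l.getD i 0 ≤ W) ∧ ∀ i, m.getD i 0 ≤ W :=
    ⟨max l.sum m.sum, fun i ↦ (getD_le_sum l i).trans (le_max_left _ _),
      fun i ↦ (getD_le_sum m i).trans (le_max_right _ _)⟩
  have hdW : d + 1 < W := ((hmd' a).2 (Nat.lt_succ_self a)).trans_le (hmW a)
  have : Finite {h // IsStripChain W l ν h} := .of_equiv _ (tableauEquivStripChain ν hlW hl)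
  have : Finite {g // IsStripChain W m ν g} := .of_equiv _ (tableauEquivStripChain ν hmW hm)
  rw [kostka_eq_card_stripChain ν hlW hl, kostka_eq_card_stripChain ν hmW hm]
  refine card_le_card_of_card_fiber_le (fun h ↦ mergeCols d h.1) (fun g ↦ mergeCols d g.1) ?_
  rintro ⟨h, hh⟩
  obtain ⟨i, hi, hcount⟩ := hh.exists_count_add_two_mul (d := d) ν.length
  rw [(hh.final _ le_rfl d).unique hld, (hh.final _ le_rfl (d + 1)).unique hld'] at hcount
  rw [(hh.final _ le_rfl (d + 1)).unique hld'] at hi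
  calc _ ≤ numPaths (IsActive d (mergeCols d h)) (diffRegion d (mergeCols d h)) ν.length (b + 2) :=
      card_mergeCols_fiber_le hld hld'
    _ ≤ numPaths (IsActive d (mergeCols d h)) (diffRegion d (mergeCols d h)) ν.length b :=
      numPaths_add_two_le (M := a - i) (isLowerSet_diffRegion d _) (by omega) (by omega)
    _ ≤ _ := hh.numPaths_le_card_mergeCols_fiber hdW hld hld' hmd hmd' (by omega) hrest

end AdjacentColumns

/-! ### Dominance and the immersion order -/

section Dominance

variable {l m ν : List ℕ} {n W : ℕ}

theorem sum_take_eq_sum_range (l : List ℕ) (k : ℕ) :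
    (l.take k).sum = ∑ i ∈ range k, l.getD i 0 := by
  induction k generalizing l with
  | zero => simp
  | succ k ih => cases l with
    | nil => simp
    | cons x l => rw [List.take_succ_cons, List.sum_cons, ih, sum_range_succ', add_comm]; rfl

theorem sum_take_succ (l : List ℕ) (k : ℕ) :
    (l.take (k + 1)).sum = (l.take k).sum + l.getD k 0 := by
  rw [sum_take_eq_sum_range, sum_take_eq_sum_range, sum_range_succ]

theorem IsPartitionOf.antitone_getD (hl : IsPartitionOf n l) : Antitone fun i ↦ l.getD i 0 := by
  refine antitone_nat_of_succ_le fun i ↦ ?_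
  rcases lt_or_ge (i + 1) l.length with hi | hi
  · rw [List.getD_eq_getElem _ _ hi, List.getD_eq_getElem _ _ (i.lt_succ_self.trans hi)]
    exact List.pairwise_iff_getElem.1 hl.1 _ _ _ _ i.lt_succ_self
  · rw [List.getD_eq_default _ _ hi]
    exact Nat.zero_le _

theorem lt_length_iff_getD_pos (hl : ∀ x ∈ l, 0 < x) (i : ℕ) : i < l.length ↔ 0 < l.getD i 0 :=
  ⟨fun hi ↦ by simpa only [List.getD_eq_getElem _ _ hi] using hl _ (List.getElem_mem hi),
    lt_length_of_lt_getD⟩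

theorem DomLE.antisymm (hl : ∀ x ∈ l, 0 < x) (hm : ∀ x ∈ m, 0 < x) (hlm : DomLE l m)
    (hml : DomLE m l) : l = m := by
  have hsum (k : ℕ) : (l.take k).sum = (m.take k).sum := (hlm k).antisymm (hml k)
  have hrow (i : ℕ) : l.getD i 0 = m.getD i 0 := by
    have hi := hsum (i + 1)
    rw [sum_take_succ, sum_take_succ, hsum i] at hi
    exact Nat.add_left_cancel hi
  refine List.ext_getElem (eq_of_forall_lt_iff fun i ↦ ?_) fun i hi hi' ↦ ?_
  · rw [lt_length_iff_getD_pos hl, lt_length_iff_getD_pos hm, hrow]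
  · rw [← List.getD_eq_getElem _ 0 hi, ← List.getD_eq_getElem _ 0 hi', hrow]

/-- After `x` steps every column has at most `x` cells, so all cells lie in the first `x` rows. -/
theorem IsStripChain.domLE {h : ℕ → ℕ → ℕ} (hh : IsStripChain W l ν h) : DomLE ν l := by
  have hle (x j : ℕ) : h x j ≤ x := by
    induction x with
    | zero => exact (hh.zero j).le
    | succ x ih => exact (hh.succ_le x j).trans (Nat.succ_le_succ ih)
  have hcol (x j : ℕ) : h x j ≤ #{i ∈ range x | j < l.getD i 0} := by
    rw [← card_range (h x j)]
    refine card_le_card fun i hi ↦ ?_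
    rw [mem_range] at hi
    exact mem_filter.2 ⟨mem_range.2 (hi.trans_le (hle x j)), hh.lt_getD hi⟩
  intro x
  rw [sum_take_eq_sum_range, sum_take_eq_sum_range]
  calc ∑ k ∈ range x, ν.getD k 0
    _ = ∑ j ∈ range W, h x j := (hh.sum_eq x).symm
    _ ≤ ∑ j ∈ range W, #{i ∈ range x | j < l.getD i 0} := sum_le_sum fun j _ ↦ hcol x j
    _ = ∑ i ∈ range x, #{j ∈ range W | j < l.getD i 0} := by
      simp only [card_filter]
      exact sum_comm
    _ ≤ ∑ i ∈ range x, l.getD i 0 := sum_le_sum fun i _ ↦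
      (card_le_card fun j hj ↦ mem_range.2 (mem_filter.1 hj).2).trans (card_range _).le

theorem domLE_of_kostka_pos (hl : Antitone fun i ↦ l.getD i 0) (hpos : 0 < kostka l ν) :
    DomLE ν l := by
  rw [kostka_eq_card_stripChain ν (getD_le_sum l) hl] at hpos
  obtain ⟨h, hh⟩ := (Nat.card_pos_iff.1 hpos).1
  exact hh.domLE

theorem kostka_self_pos (l : List ℕ) : 0 < kostka l l := by
  refine Nat.card_pos_iff.2 ⟨⟨fun i j ↦ if j < l.getD i 0 then i else 0, ⟨?_, ?_, ?_⟩, ?_⟩,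
    finite_tableaux⟩
  · intro i j₁ j₂ hj hij
    exact ((if_pos (hj.trans_lt hij)).trans (if_pos hij).symm).le
  · intro i₁ i₂ j hi hij
    dsimp only
    split_ifs <;> omega
  · intro i j hij
    exact if_neg hij.not_gt
  · intro k
    have hrow (c : ℕ × ℕ) : c ∈ (range (l.getD k 0)).map ⟨Prod.mk k, Prod.mk_right_injective k⟩ ↔
        c.2 < l.getD c.1 0 ∧ (if c.2 < l.getD c.1 0 then c.1 else 0) = k := by
      obtain ⟨i, j⟩ := c
      simp only [mem_map, mem_range, Function.Embedding.coeFn_mk, Prod.mk.injEq]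
      constructor
      · rintro ⟨j, hj, rfl, rfl⟩
        exact ⟨hj, if_pos hj⟩
      · rintro ⟨hj, hk⟩
        rw [if_pos hj] at hk
        exact ⟨j, hk ▸ hj, hk.symm, rfl⟩
    rw [Nat.subtype_card _ hrow, card_map, card_range]

theorem ImmersionLE.domLE (hl : IsPartitionOf n l) (hm : Antitone fun i ↦ m.getD i 0)
    (hlm : ImmersionLE n l m) : DomLE l m :=
  domLE_of_kostka_pos hm ((kostka_self_pos l).trans_le (hlm l hl))

end Dominance

/-! ### Moving one box inside a block of equal rows -/

section BoxMove

variable {l m ν : List ℕ} {n d b α ω : ℕ}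

/-- `m` is obtained from `l` by moving one box from row `ω` to row `α`, with the rows numbered from
`0`. -/
def IsBoxMove (l m : List ℕ) (α ω : ℕ) : Prop :=
  ∀ i, m.getD i 0 + (if i = ω then 1 else 0) = l.getD i 0 + (if i = α then 1 else 0)

theorem IsBoxMove.sum_take (hlm : IsBoxMove l m α ω) (k : ℕ) :
    (m.take k).sum + (if ω < k then 1 else 0) = (l.take k).sum + (if α < k then 1 else 0) := by
  simpa [sum_take_eq_sum_range, sum_add_distrib] using
    sum_congr (rfl : range k = range k) fun i _ ↦ hlm i

theorem IsBoxMove.hasColLength (hlm : IsBoxMove l m α ω) (hαω : α < ω)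
    (hd : HasColLength l d (ω + 1)) (hd' : HasColLength l (d + 1) α) : HasColLength m d ω :=
  fun i ↦ by grind [hlm i, hd i, hd' i]

theorem IsBoxMove.hasColLength_succ (hlm : IsBoxMove l m α ω) (hαω : α < ω)
    (hd : HasColLength l d (ω + 1)) (hd' : HasColLength l (d + 1) α) :
    HasColLength m (d + 1) (α + 1) :=
  fun i ↦ by grind [hlm i, hd i, hd' i]

theorem IsBoxMove.hasColLength_of_ne (hlm : IsBoxMove l m α ω) (hαω : α < ω)
    (hd : HasColLength l d (ω + 1)) (hd' : HasColLength l (d + 1) α) (j a : ℕ) (hj : j ≠ d)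
    (hj' : j ≠ d + 1) (ha : HasColLength l j a) : HasColLength m j a :=
  fun i ↦ by grind [hlm i, hd i, hd' i, ha i]

theorem IsBoxMove.antitone_getD (hlm : IsBoxMove l m α ω) (hl : Antitone fun i ↦ l.getD i 0)
    (hd : HasColLength l d (ω + 1)) (hd' : HasColLength l (d + 1) α) :
    Antitone fun i ↦ m.getD i 0 :=
  antitone_nat_of_succ_le fun i ↦ by
    grind [hlm i, hlm (i + 1), hd i, hd (i + 1), hd' i, hd' (i + 1), hl i.le_succ]

theorem IsBoxMove.kostka_le (ν : List ℕ) (hlm : IsBoxMove l m α (α + b + 1))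
    (hl : Antitone fun i ↦ l.getD i 0) (hd : HasColLength l d (α + b + 2))
    (hd' : HasColLength l (d + 1) α) (hab : 2 * α ≤ b * (b + 3)) : kostka l ν ≤ kostka m ν := by
  have hαω : α < α + b + 1 := by omega
  have hmd : HasColLength m d (α + 1 + b) := by
    simpa only [add_right_comm] using hlm.hasColLength hαω hd hd'
  exact kostka_le_kostka_of_hasColLength (a := α) ν hl (hlm.antitone_getD hl hd hd') hd hd' hmd
    (hlm.hasColLength_succ hαω hd hd') (hlm.hasColLength_of_ne hαω hd hd') hab

theorem sum_take_lt_of_getD_le (hν : Antitone fun i ↦ ν.getD i 0) {k e : ℕ}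
    (hl : ∀ i, k < i → i < e → d < l.getD i 0) (hνk : ν.getD k 0 ≤ d)
    (hsum : (ν.take (k + 1)).sum ≤ (l.take (k + 1)).sum) (hke : k + 1 < e) :
    (ν.take e).sum < (l.take e).sum := by
  induction e, hke using Nat.le_induction with
  | base =>
    have := hν k.le_succ
    have := hl (k + 1) (by omega) (by omega)
    grind [sum_take_succ l (k + 1), sum_take_succ ν (k + 1)]
  | succ e hke ih =>
    have := ih fun i hki hie ↦ hl i hki (by omega)
    have := hν (show k ≤ e by omega)
    have := hl e (by omega) (by omega)
    grind [sum_take_succ l e, sum_take_succ ν e]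

theorem HasColLength.getD_eq (hd : HasColLength l d (ω + 1)) (hd' : HasColLength l (d + 1) α)
    {i : ℕ} (hαi : α ≤ i) (hiω : i ≤ ω) : l.getD i 0 = d + 1 := by
  grind [hd i, hd' i]

theorem IsBoxMove.domLE_of_getD_le (hlm : IsBoxMove l m α ω) (hd : HasColLength l d (ω + 1))
    (hd' : HasColLength l (d + 1) α) (hν : Antitone fun i ↦ ν.getD i 0) (hνm : DomLE ν m)
    (hνα : ν.getD α 0 ≤ d + 1) : DomLE ν l := by
  intro k
  induction k with
  | zero => simp
  | succ k ih =>
    by_cases hk : α ≤ k ∧ k ≤ ω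
    · rw [sum_take_succ, sum_take_succ, hd.getD_eq hd' hk.1 hk.2]
      exact Nat.add_le_add ih ((hν hk.1).trans hνα)
    · grind [hlm.sum_take (k + 1), hνm (k + 1)]

theorem IsBoxMove.domLE_of_le_getD (hlm : IsBoxMove l m α ω) (hd : HasColLength l d (ω + 1))
    (hd' : HasColLength l (d + 1) α) (hν : Antitone fun i ↦ ν.getD i 0) (hlν : DomLE l ν)
    (hνm : DomLE ν m) (hνα : d + 2 ≤ ν.getD α 0) : DomLE m ν := by
  intro k
  induction k with
  | zero => simp
  | succ k ih =>
    by_cases hk : α ≤ k ∧ k < ω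
    swap
    · grind [hlm.sum_take (k + 1), hlν (k + 1)]
    have hlk := hd.getD_eq hd' hk.1 hk.2.le
    have hmk := hlm.sum_take k
    have hmk' := hlm.sum_take (k + 1)
    have hlν' := hlν k
    have hνm' := hνm k
    have hνsucc := sum_take_succ ν k
    have hlsucc := sum_take_succ l k
    rcases hk.1.eq_or_lt with rfl | hαk
    · grind
    have hνk : d < ν.getD k 0 := by
      by_contra! hνk
      have hsum : (ν.take (k + 1)).sum ≤ (l.take (k + 1)).sum := by grind
      exact (hlν (ω + 1)).not_gt
        (sum_take_lt_of_getD_le hν (fun i _ hiω ↦ (hd i).2 hiω) hνk hsum (by omega))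
    grind

/-- The difference of the partial sums of `ν` and `l` is `0` or `1`, vanishes outside the block and
is concave along it, so it is constant inside the block. -/
theorem IsBoxMove.domLE_or_domLE (hlm : IsBoxMove l m α ω) (hd : HasColLength l d (ω + 1))
    (hd' : HasColLength l (d + 1) α) (hν : Antitone fun i ↦ ν.getD i 0) (hlν : DomLE l ν)
    (hνm : DomLE ν m) : DomLE ν l ∨ DomLE m ν :=
  (Nat.lt_or_ge (d + 1) (ν.getD α 0)).symm.imp (hlm.domLE_of_getD_le hd hd' hν hνm)
    (hlm.domLE_of_le_getD hd hd' hν hlν hνm)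

theorem IsBoxMove.ne (hlm : IsBoxMove l m α ω) (hαω : α ≠ ω) : l ≠ m := by
  rintro rfl
  simpa [hαω] using hlm α

theorem IsBoxMove.immersionCovBy (hlm : IsBoxMove l m α (α + b + 1)) (hl : IsPartitionOf n l)
    (hm : ∀ x ∈ m, 0 < x) (hd : HasColLength l d (α + b + 2)) (hd' : HasColLength l (d + 1) α)
    (hab : 2 * α ≤ b * (b + 3)) : ImmersionCovBy n l m := by
  have hanti := hlm.antitone_getD hl.antitone_getD hd hd'
  refine ⟨⟨fun ν _ ↦ hlm.kostka_le ν hl.antitone_getD hd hd' hab, hlm.ne (by omega)⟩, ?_⟩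
  rintro ν hν ⟨hlν, hne⟩ ⟨hνm, hne'⟩
  have hlν := hlν.domLE hl hν.antitone_getD
  have hνm := hνm.domLE hν hanti
  rcases hlm.domLE_or_domLE hd hd' hν.antitone_getD hlν hνm with hνl | hmν
  · exact hne (hlν.antisymm hl.2.1 hν.2.1 hνl)
  · exact hne' (hνm.antisymm hν.2.1 hm hmν)

end BoxMove

section MovedShape

variable {c d b β : ℕ} {pre suf : List ℕ}

theorem getD_filter_ne_zero {t : List ℕ} (ht : t.Pairwise (· ≥ ·)) (i : ℕ) :
    (t.filter fun x ↦ x ≠ 0).getD i 0 = t.getD i 0 := by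
  induction t generalizing i with
  | nil => rfl
  | cons x t ih =>
    rw [List.pairwise_cons] at ht
    by_cases hx : x = 0
    · have hzero : ∀ y ∈ x :: t, y = 0 := fun y hy ↦ by
        rcases List.mem_cons.1 hy with rfl | hy
        · exact hx
        · exact Nat.le_zero.1 ((ht.1 y hy).trans hx.le)
      rw [List.filter_eq_nil_iff.2 (by simpa using hzero), List.eq_replicate_of_mem hzero]
      simp
    · rw [List.filter_cons_of_pos (by simpa using hx)]
      cases i with
      | zero => rfl
      | succ i => exact ih ht.2 i

theorem hasColLength_append {j : ℕ} (hpre : ∀ x ∈ pre, j < x) (hsuf : ∀ x ∈ suf, x ≤ j) :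
    HasColLength (pre ++ suf) j pre.length := by
  intro i
  rcases lt_or_ge i pre.length with hi | hi
  · rw [List.getD_append _ _ _ _ hi, List.getD_eq_getElem _ _ hi]
    exact iff_of_true (hpre _ (List.getElem_mem hi)) hi
  · rw [List.getD_append_right _ _ _ _ hi]
    refine iff_of_false (fun hj ↦ ?_) hi.not_gt
    have hlt := lt_length_of_lt_getD hj
    rw [List.getD_eq_getElem _ _ hlt] at hj
    exact (hsuf _ (List.getElem_mem hlt)).not_gt hj

theorem hasColLength_append_replicate (hpre : ∀ x ∈ pre, d + 1 < x) (hsuf : ∀ x ∈ suf, x ≤ d)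
    (β : ℕ) : HasColLength (pre ++ List.replicate β (d + 1) ++ suf) d (pre.length + β) := by
  simpa using hasColLength_append (pre := pre ++ List.replicate β (d + 1))
    (List.forall_mem_append.2 ⟨fun x hx ↦ (Nat.lt_succ_self d).trans (hpre x hx),
      fun x hx ↦ (List.eq_of_mem_replicate hx).symm ▸ Nat.lt_succ_self d⟩) hsuf

theorem hasColLength_succ_append_replicate (hpre : ∀ x ∈ pre, d + 1 < x)
    (hsuf : ∀ x ∈ suf, x ≤ d) (β : ℕ) :
    HasColLength (pre ++ List.replicate β (d + 1) ++ suf) (d + 1) pre.length := by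
  rw [List.append_assoc]
  exact hasColLength_append hpre (List.forall_mem_append.2
    ⟨fun x hx ↦ (List.eq_of_mem_replicate hx).le, fun x hx ↦ (hsuf x hx).trans d.le_succ⟩)

theorem isBoxMove_cons_replicate_append (x y b : ℕ) (suf : List ℕ) :
    IsBoxMove (x :: (List.replicate b y ++ (d + 1) :: suf))
      ((x + 1) :: (List.replicate b y ++ d :: suf)) 0 (b + 1) := by
  rintro (_ | i)
  · simp
  · rcases lt_trichotomy i b with hi | rfl | hi <;> grind

theorem IsBoxMove.append_left {l m : List ℕ} {α ω : ℕ} (hlm : IsBoxMove l m α ω) (pre : List ℕ) :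
    IsBoxMove (pre ++ l) (pre ++ m) (pre.length + α) (pre.length + ω) := by
  intro i
  rcases lt_or_ge i pre.length with hi | hi
  · rw [List.getD_append _ _ _ _ hi, List.getD_append _ _ _ _ hi,
      if_neg (by omega), if_neg (by omega)]
  · grind [IsBoxMove, hlm (i - pre.length)]

theorem getD_movedShape (hsuf : (d :: suf).Pairwise (· ≥ ·)) (i : ℕ) :
    (movedShape (d + 1) (b + 2) pre suf).getD i 0 =
      (pre ++ (d + 2) :: (List.replicate b (d + 1) ++ d :: suf)).getD i 0 := by
  have hassoc (t : List ℕ) : pre ++ (d + 2) :: (List.replicate b (d + 1) ++ t) =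
      (pre ++ (d + 2) :: List.replicate b (d + 1)) ++ t := by simp
  simp only [movedShape, Nat.add_sub_cancel, hassoc]
  rcases lt_or_ge i (pre ++ (d + 2) :: List.replicate b (d + 1)).length with hi | hi
  · rw [List.getD_append _ _ _ _ hi, List.getD_append _ _ _ _ hi]
  · rw [List.getD_append_right _ _ _ _ hi, List.getD_append_right _ _ _ _ hi,
      getD_filter_ne_zero hsuf]

theorem isBoxMove_movedShape (hsuf : (d :: suf).Pairwise (· ≥ ·)) :
    IsBoxMove (pre ++ List.replicate (b + 2) (d + 1) ++ suf) (movedShape (d + 1) (b + 2) pre suf)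
      pre.length (pre.length + b + 1) := by
  have hblock : List.replicate (b + 2) (d + 1) ++ suf =
      (d + 1) :: (List.replicate b (d + 1) ++ (d + 1) :: suf) := by
    rw [List.replicate_succ, List.replicate_succ']
    simp
  intro i
  rw [getD_movedShape hsuf, List.append_assoc, hblock]
  exact (isBoxMove_cons_replicate_append (d + 1) (d + 1) b suf).append_left pre i

theorem pos_of_mem_movedShape (hpre : ∀ x ∈ pre, 0 < x) (hc : 0 < c) :
    ∀ x ∈ movedShape c β pre suf, 0 < x := by
  intro x hx
  simp only [movedShape, List.mem_append, List.mem_cons, List.mem_replicate, List.mem_filter,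
    decide_eq_true_eq] at hx
  rcases hx with hx | rfl | ⟨-, rfl⟩ | ⟨-, hx⟩
  · exact hpre x hx
  · exact Nat.succ_pos c
  · exact hc
  · exact Nat.pos_of_ne_zero hx

end MovedShape

theorem immersion_cover_of_moved_box_general (n c β : ℕ) (pre suf : List ℕ)
    (hpre : ∀ x ∈ pre, c < x) (hsuf : ∀ x ∈ suf, x < c)
    (hlam : IsPartitionOf n (pre ++ List.replicate β c ++ suf))
    (hβ : 2 * pre.length + β + 2 ≤ β ^ 2) :
    ImmersionCovBy n (pre ++ List.replicate β c ++ suf) (movedShape c β pre suf) := by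
  obtain ⟨b, rfl⟩ : ∃ b, β = b + 2 := Nat.exists_eq_add_of_le' (by nlinarith)
  have hc : 0 < c := hlam.2.1 c (by simp)
  obtain ⟨d, rfl⟩ := Nat.exists_eq_add_of_le' hc
  have hsuf' : ∀ x ∈ suf, x ≤ d := fun x hx ↦ Nat.lt_succ_iff.1 (hsuf x hx)
  have htail : (d :: suf).Pairwise (· ≥ ·) :=
    List.pairwise_cons.2 ⟨hsuf', (List.pairwise_append.1 hlam.1).2.1⟩
  exact (isBoxMove_movedShape htail).immersionCovBy hlam
    (pos_of_mem_movedShape (fun x hx ↦ hc.trans (hpre x hx)) hc)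
    (hasColLength_append_replicate hpre hsuf' (b + 2))
    (hasColLength_succ_append_replicate hpre hsuf' (b + 2)) (by linarith)

/-- If `β ≥ α + 2`, or `β = α + 1` with `α ≥ 2`, or `β = α` with
`α ≥ 4`, then `μ` (obtained from `λ = (pre, c^β, suf)` by moving one box) covers
`λ` in the immersion poset on partitions of `n`. -/
theorem immersion_cover_of_moved_box (n c α β : ℕ) (pre suf : List ℕ) (hc : 1 ≤ c)
    (hα : pre.length = α)
    (hpre : ∀ x ∈ pre, c < x) (hsuf : ∀ x ∈ suf, x < c)
    (hlam : IsPartitionOf n (pre ++ List.replicate β c ++ suf))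
    (hcase : α + 2 ≤ β ∨ (β = α + 1 ∧ 2 ≤ α) ∨ (β = α ∧ 4 ≤ α)) :
    ImmersionCovBy n (pre ++ List.replicate β c ++ suf) (movedShape c β pre suf) := by
  refine immersion_cover_of_moved_box_general n c β pre suf hpre hsuf hlam (hα ▸ ?_)
  rcases hcase with h | ⟨rfl, h⟩ | ⟨rfl, h⟩ <;> nlinarith
end

section
/- Let λ = (a, 1^b) be a hook partition of n and let λ^t denote its conjugate (transpose) partition. If λ ≤_D λ^t in dominance order, then λ ≤_I λ^t in the immersion poset. -/
open Finset MvPolynomial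

/-!
In a semistandard tableau of shape `(a, 1^b)` whose content uses exactly `m` letters, the corner
holds the smallest letter, the leg is an arbitrary `b`-subset of the other `m - 1` letters, and the
arm is the remaining multiset in increasing order. Hence the Kostka number is `(m - 1).choose b`.
Since `m ≤ n`, comparing two hooks reduces to unimodality and symmetry of the binomial coefficients
`(m - 1).choose ·`.
-/

section SortedEnumeration

variable {α : Type*}

lemma eqOn_of_monotoneOn_of_map_range_eq [PartialOrder α] {f g : ℕ → α} {n : ℕ}
    (hf : MonotoneOn f (Set.Iio n)) (hg : MonotoneOn g (Set.Iio n))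
    (h : (Multiset.range n).map f = (Multiset.range n).map g) : Set.EqOn f g (Set.Iio n) := by
  have sorted {u : ℕ → α} (hu : MonotoneOn u (Set.Iio n)) :
      ((List.range n).map u).Pairwise (· ≤ ·) :=
    List.pairwise_map.2 <| List.pairwise_lt_range.imp_of_mem fun hi hj hij =>
      hu (List.mem_range.1 hi) (List.mem_range.1 hj) hij.le
  have heq : (List.range n).map f = (List.range n).map g :=
    (Multiset.coe_eq_coe.1 h).eq_of_pairwise' (sorted hf) (sorted hg)
  exact fun i hi => List.map_inj_left.1 heq i (List.mem_range.2 hi)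

lemma exists_monotoneOn_map_range_eq [LinearOrder α] [Inhabited α] (s : Multiset α) :
    ∃ f : ℕ → α, MonotoneOn f (Set.Iio s.card) ∧ (Multiset.range s.card).map f = s := by
  obtain ⟨l, hl, rfl⟩ : ∃ l : List α, l.Pairwise (· ≤ ·) ∧ (l : Multiset α) = s :=
    ⟨s.sort (· ≤ ·), s.pairwise_sort _, s.sort_eq _⟩
  refine ⟨fun i => l.getD i default, fun i hi j hj hij => ?_, congrArg Multiset.ofList ?_⟩
  · rw [Set.mem_Iio, Multiset.coe_card] at hi hj
    simp only [List.getD_eq_getElem _ _ hi, List.getD_eq_getElem _ _ hj]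
    exact hl.rel_get_of_le (a := ⟨i, hi⟩) (b := ⟨j, hj⟩) hij
  · exact List.ext_getElem (by simp) fun i _ hi => by simp [hi]

lemma strictMonoOn_of_monotoneOn_of_nodup_map_range [PartialOrder α] {f : ℕ → α} {n : ℕ}
    (hf : MonotoneOn f (Set.Iio n)) (h : ((Multiset.range n).map f).Nodup) :
    StrictMonoOn f (Set.Iio n) :=
  hf.strictMonoOn_of_injOn fun i hi j hj =>
    Multiset.inj_on_of_nodup_map h i (Multiset.mem_range.2 hi) j (Multiset.mem_range.2 hj)

end SortedEnumeration

section Letters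

/-- The multiset of entries of a tableau of content `ν`: the letter `k` occurs `ν.getD k 0`
times. -/
noncomputable def letters (ν : List ℕ) : Multiset ℕ := Finsupp.toMultiset ν.toFinsupp

lemma count_letters (ν : List ℕ) (k : ℕ) : (letters ν).count k = ν.getD k 0 := by
  rw [letters, Finsupp.count_toMultiset, List.toFinsupp_apply]

lemma card_letters (ν : List ℕ) : (letters ν).card = ν.sum := by
  rw [letters, Finsupp.card_toMultiset,
    Finsupp.sum_of_support_subset _ ν.toFinsupp_support_subset _ fun _ _ => rfl,
    ← Fin.sum_univ_eq_sum_range (fun k => id (ν.toFinsupp k))]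
  simp

lemma mem_letters_iff {ν : List ℕ} (hpos : ∀ x ∈ ν, 0 < x) {k : ℕ} :
    k ∈ letters ν ↔ k < ν.length := by
  rw [← Multiset.count_pos, count_letters]
  refine ⟨fun h => ?_, fun h => ?_⟩
  · by_contra! hk
    exact h.ne' (List.getD_eq_default _ _ hk)
  · rw [List.getD_eq_getElem _ _ h]
    exact hpos _ (List.getElem_mem h)

end Letters

section Hook

/-- The hook shape `(a, 1^b)`, a partition of `a + b` when `1 ≤ a`. -/
abbrev hook (a b : ℕ) : List ℕ := a :: List.replicate b 1

/-- The entries of the first row of a filling of `(a, 1^b)`, corner included. -/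
def arm (a : ℕ) (T : ℕ → ℕ → ℕ) : Multiset ℕ := (Multiset.range a).map (T 0)

/-- The entries of the first column of a filling of `(a, 1^b)`, corner excluded. -/
def leg (b : ℕ) (T : ℕ → ℕ → ℕ) : Multiset ℕ := (Multiset.range b).map fun i => T (i + 1) 0

variable {a b : ℕ} {ν : List ℕ} {T T' : ℕ → ℕ → ℕ}

lemma lt_getD_hook_succ_iff {i j : ℕ} : j < (hook a b).getD (i + 1) 0 ↔ i < b ∧ j = 0 := by
  rw [List.getD_cons_succ]
  by_cases hi : i < b <;> simp [hi]

lemma card_hook_cells_eq_count (k : ℕ) :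
    Nat.card {c : ℕ × ℕ // c.2 < (hook a b).getD c.1 0 ∧ T c.1 c.2 = k} =
      (arm a T + leg b T).count k := by
  let armCells : Finset (ℕ × ℕ) := ({j ∈ range a | k = T 0 j}).image fun j => (0, j)
  let legCells : Finset (ℕ × ℕ) := ({i ∈ range b | k = T (i + 1) 0}).image fun i => (i + 1, 0)
  have hdisj : Disjoint armCells legCells := by grind [Finset.disjoint_left]
  have harm : armCells.card = (arm a T).count k := by
    rw [arm, Multiset.count_map]
    exact card_image_of_injective _ (Prod.mk_right_injective 0)
  have hleg : legCells.card = (leg b T).count k := by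
    rw [leg, Multiset.count_map]
    exact card_image_of_injective _ fun i j hij => by simpa using hij
  rw [Multiset.count_add, ← harm, ← hleg, ← card_union_of_disjoint hdisj]
  refine Nat.subtype_card _ fun ⟨i, j⟩ => ?_
  cases i with
  | zero => simp [armCells, legCells, eq_comm]
  | succ i =>
    simp only [armCells, legCells, mem_union, mem_image, mem_filter, mem_range,
      lt_getD_hook_succ_iff]
    grind

lemma hasContent_hook_iff : HasContent (hook a b) T ν ↔ arm a T + leg b T = letters ν := by
  simp only [HasContent, card_hook_cells_eq_count, Multiset.ext, count_letters]

lemma isSSYT_hook_iff :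
    IsSSYT (hook a b) T ↔
      MonotoneOn (T 0) (Set.Iio a) ∧ StrictMonoOn (fun i => T (i + 1) 0) (Set.Iio b) ∧
        (∀ i < b, T 0 0 < T (i + 1) 0) ∧ ∀ i j, (hook a b).getD i 0 ≤ j → T i j = 0 := by
  refine ⟨fun ⟨hrow, hcol, hout⟩ => ⟨?_, ?_, ?_, hout⟩,
    fun ⟨harm, hleg, hcorner, hout⟩ => ⟨?_, ?_, hout⟩⟩
  · exact fun j _ j' hj' hjj' => hrow 0 j j' hjj' hj'
  · exact fun i _ i' hi' hii' =>
      hcol _ _ 0 (Nat.succ_lt_succ hii') (lt_getD_hook_succ_iff.2 ⟨hi', rfl⟩)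
  · exact fun i hi => hcol 0 _ 0 i.succ_pos (lt_getD_hook_succ_iff.2 ⟨hi, rfl⟩)
  · rintro (_ | i) j j' hjj' hj'
    · exact harm (hjj'.trans_lt hj') hj' hjj'
    · obtain ⟨-, rfl⟩ := lt_getD_hook_succ_iff.1 hj'
      rw [Nat.le_zero.1 hjj']
  · rintro i (_ | i') j hii' hj
    · exact absurd hii' i.not_lt_zero
    obtain ⟨hi', rfl⟩ := lt_getD_hook_succ_iff.1 hj
    cases i with
    | zero => exact hcorner i' hi'
    | succ i =>
      have hlt : i < i' := Nat.lt_of_succ_lt_succ hii'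
      exact hleg (hlt.trans hi') hi' hlt

namespace IsSSYT

lemma nodup_leg (hT : IsSSYT (hook a b) T) : (leg b T).Nodup :=
  (Multiset.nodup_range b).map_on fun _ hi _ hj =>
    (isSSYT_hook_iff.1 hT).2.1.injOn (Multiset.mem_range.1 hi) (Multiset.mem_range.1 hj)

lemma pos_of_mem_leg (hT : IsSSYT (hook a b) T) {k : ℕ} (hk : k ∈ leg b T) : 0 < k := by
  obtain ⟨i, hi, rfl⟩ := Multiset.mem_map.1 hk
  exact ((isSSYT_hook_iff.1 hT).2.2.1 i (Multiset.mem_range.1 hi)).pos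

lemma hook_ext (hT : IsSSYT (hook a b) T) (hT' : IsSSYT (hook a b) T')
    (harm : arm a T = arm a T') (hleg : leg b T = leg b T') : T = T' := by
  obtain ⟨hrow, hcol, -, hout⟩ := isSSYT_hook_iff.1 hT
  obtain ⟨hrow', hcol', -, hout'⟩ := isSSYT_hook_iff.1 hT'
  funext i j
  rcases le_or_gt ((hook a b).getD i 0) j with hj | hj
  · rw [hout i j hj, hout' i j hj]
  cases i with
  | zero => exact eqOn_of_monotoneOn_of_map_range_eq hrow hrow' harm hj
  | succ i =>
    obtain ⟨hi, rfl⟩ := lt_getD_hook_succ_iff.1 hj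
    exact eqOn_of_monotoneOn_of_map_range_eq hcol.monotoneOn hcol'.monotoneOn hleg hi

end IsSSYT

/-- The filling of `(a, 1^b)` with first row `f` and, below the corner, first column `g`; it
vanishes outside the diagram, as `IsSSYT` requires. -/
def hookFilling (a b : ℕ) (f g : ℕ → ℕ) : ℕ → ℕ → ℕ
  | 0, j => if j < a then f j else 0
  | i + 1, 0 => if i < b then g i else 0
  | _ + 1, _ + 1 => 0

lemma arm_hookFilling (f g : ℕ → ℕ) : arm a (hookFilling a b f g) = (Multiset.range a).map f :=
  Multiset.map_congr rfl fun _ hj => if_pos (Multiset.mem_range.1 hj)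

lemma leg_hookFilling (f g : ℕ → ℕ) : leg b (hookFilling a b f g) = (Multiset.range b).map g :=
  Multiset.map_congr rfl fun _ hi => if_pos (Multiset.mem_range.1 hi)

lemma isSSYT_hookFilling {f g : ℕ → ℕ} (ha : 1 ≤ a) (hf : MonotoneOn f (Set.Iio a))
    (hg : StrictMonoOn g (Set.Iio b)) (hfg : ∀ i < b, f 0 < g i) :
    IsSSYT (hook a b) (hookFilling a b f g) := by
  have hrow : Set.EqOn f (hookFilling a b f g 0) (Set.Iio a) := fun _ hj => (if_pos hj).symm
  have hcol : Set.EqOn g (fun i => hookFilling a b f g (i + 1) 0) (Set.Iio b) :=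
    fun _ hi => (if_pos hi).symm
  refine isSSYT_hook_iff.2 ⟨hf.congr hrow, hg.congr hcol, fun i hi => ?_, ?_⟩
  · exact (hrow (Set.mem_Iio.2 ha)).symm.trans_lt ((hfg i hi).trans_eq (hcol hi))
  · rintro (_ | i) (_ | j) hj
    · exact if_neg hj.not_gt
    · exact if_neg hj.not_gt
    · exact if_neg fun hi => hj.not_gt (lt_getD_hook_succ_iff.2 ⟨hi, rfl⟩)
    · rfl

lemma exists_isSSYT_hook_of_corner_zero {R L : Multiset ℕ} (hR : 0 ∈ R) (hL : L.Nodup)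
    (hpos : ∀ k ∈ L, 0 < k) :
    ∃ T, IsSSYT (hook R.card L.card) T ∧ arm R.card T = R ∧ leg L.card T = L := by
  obtain ⟨f, hf, hfR⟩ := exists_monotoneOn_map_range_eq R
  obtain ⟨g, hg, hgL⟩ := exists_monotoneOn_map_range_eq L
  have hcard : 0 < R.card := Multiset.card_pos_iff_exists_mem.2 ⟨0, hR⟩
  have hcorner : f 0 = 0 := by
    obtain ⟨j, hj, hj0⟩ := Multiset.mem_map.1 (hfR ▸ hR)
    exact Nat.le_zero.1 (hj0 ▸ hf hcard (Multiset.mem_range.1 hj) j.zero_le)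
  have hgpos : ∀ i < L.card, f 0 < g i := fun i hi =>
    hcorner.trans_lt <| hpos _ (hgL ▸ Multiset.mem_map_of_mem g (Multiset.mem_range.2 hi))
  have hgstrict := strictMonoOn_of_monotoneOn_of_nodup_map_range hg (hgL.symm ▸ hL)
  exact ⟨hookFilling R.card L.card f g, isSSYT_hookFilling hcard hf hgstrict hgpos,
    (arm_hookFilling f g).trans hfR, (leg_hookFilling f g).trans hgL⟩

lemma exists_tableau_with_leg (ha : 1 ≤ a) (hpos : ∀ x ∈ ν, 0 < x) (hsum : ν.sum = a + b)
    {S : Finset ℕ} (hS : S ∈ powersetCard b (Ico 1 ν.length)) :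
    ∃ T, (IsSSYT (hook a b) T ∧ HasContent (hook a b) T ν) ∧ leg b T = S.val := by
  obtain ⟨hsub, hb⟩ := mem_powersetCard.1 hS
  have hle : S.val ≤ letters ν := (Multiset.le_iff_subset S.nodup).2 fun k hk =>
    (mem_letters_iff hpos).2 (mem_Ico.1 (hsub hk)).2
  have hzero : 0 ∈ letters ν := by
    rw [mem_letters_iff hpos, List.length_pos_iff]
    rintro rfl
    rw [List.sum_nil] at hsum
    omega
  have hzeroS : 0 ∉ S.val := fun h => Nat.not_succ_le_zero 0 (mem_Ico.1 (hsub h)).1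
  obtain ⟨R, hR⟩ := Multiset.le_iff_exists_add.1 hle
  have hRa : R.card = a := by
    have := congrArg Multiset.card hR
    rw [card_letters, hsum, Multiset.card_add, card_val, hb] at this
    omega
  have hzeroR : 0 ∈ R := (Multiset.mem_add.1 (hR ▸ hzero)).resolve_left hzeroS
  obtain ⟨T, hT, harm, hleg⟩ := exists_isSSYT_hook_of_corner_zero hzeroR S.nodup
    fun k hk => (mem_Ico.1 (hsub hk)).1
  rw [card_val, hb] at hT hleg
  rw [hRa] at hT harm
  exact ⟨T, ⟨hT, hasContent_hook_iff.2 (by rw [harm, hleg, hR, add_comm])⟩, hleg⟩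

lemma leg_mem_powersetCard (hpos : ∀ x ∈ ν, 0 < x) (hT : IsSSYT (hook a b) T)
    (hc : HasContent (hook a b) T ν) :
    (⟨leg b T, hT.nodup_leg⟩ : Finset ℕ) ∈ powersetCard b (Ico 1 ν.length) := by
  refine mem_powersetCard.2 ⟨fun k hk => mem_Ico.2 ⟨hT.pos_of_mem_leg hk, ?_⟩, ?_⟩
  · rw [← mem_letters_iff hpos, ← hasContent_hook_iff.1 hc]
    exact Multiset.mem_add.2 (Or.inr hk)
  · simp [leg]

theorem kostka_hook (ha : 1 ≤ a) (hpos : ∀ x ∈ ν, 0 < x) (hsum : ν.sum = a + b) :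
    kostka (hook a b) ν = (ν.length - 1).choose b := by
  let legOf (T : {T // IsSSYT (hook a b) T ∧ HasContent (hook a b) T ν}) :
      powersetCard b (Ico 1 ν.length) := ⟨_, leg_mem_powersetCard hpos T.2.1 T.2.2⟩
  have hbij : legOf.Bijective := by
    refine ⟨fun ⟨T, hT, hc⟩ ⟨T', hT', hc'⟩ h => ?_, fun ⟨S, hS⟩ => ?_⟩
    · have hleg : leg b T = leg b T' := congrArg (fun S => S.1.val) h
      have hsplit : arm a T + leg b T = arm a T' + leg b T' :=
        (hasContent_hook_iff.1 hc).trans (hasContent_hook_iff.1 hc').symm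
      rw [hleg, add_left_inj] at hsplit
      exact Subtype.ext (hT.hook_ext hT' hsplit hleg)
    · obtain ⟨T, hT, hleg⟩ := exists_tableau_with_leg ha hpos hsum hS
      exact ⟨⟨T, hT⟩, Subtype.ext (val_injective hleg)⟩
  calc kostka (hook a b) ν = Nat.card (powersetCard b (Ico 1 ν.length)) :=
        Nat.card_eq_of_bijective legOf hbij
    _ = (ν.length - 1).choose b := by
        rw [Nat.card_eq_finsetCard, card_powersetCard, Nat.card_Ico]

end Hook

section Binomial

lemma monotoneOn_choose_Iic_half (m : ℕ) : MonotoneOn m.choose (Set.Iic (m / 2)) :=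
  monotoneOn_of_le_succ Set.ordConnected_Iic fun _ _ _ hk =>
    Nat.choose_le_succ_of_lt_half_left (Nat.lt_of_succ_le hk)

lemma choose_le_choose_of_le_of_le_add {m b c : ℕ} (hcb : c ≤ b) (hm : m ≤ c + b) :
    m.choose b ≤ m.choose c := by
  rcases lt_or_ge m b with hmb | hbm
  · simp [Nat.choose_eq_zero_of_lt hmb]
  rw [← Nat.choose_symm hbm]
  rcases le_or_gt c (m / 2) with hc | hc
  · exact monotoneOn_choose_Iic_half m (Set.mem_Iic.2 (by omega)) hc (by omega)
  · rw [← Nat.choose_symm (hcb.trans hbm)]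
    exact monotoneOn_choose_Iic_half m (Set.mem_Iic.2 (by omega)) (Set.mem_Iic.2 (by omega))
      (by omega)

end Binomial

theorem hook_transpose_immersion_general {a b a' b' : ℕ} {ν : List ℕ} (ha : 1 ≤ a)
    (hsize : a' + b' = a + b) (hb : b' ≤ b) (hab : a ≤ b' + 1) (hpos : ∀ x ∈ ν, 0 < x)
    (hsum : ν.sum = a + b) : kostka (hook a b) ν ≤ kostka (hook a' b') ν := by
  have hlen : ν.length ≤ a + b := hsum ▸ List.length_le_sum_of_one_le ν hpos
  rw [kostka_hook ha hpos hsum, kostka_hook (by omega) hpos (hsum.trans hsize.symm)]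
  exact choose_le_choose_of_le_of_le_add hb (by omega)

/-- For a hook `λ = (a, 1^b)` of `n` with conjugate
`λ^t = (b+1, 1^{a-1})`, if `λ ≤_D λ^t` then `λ ≤_I λ^t`. -/
theorem hook_transpose_immersion (n a b : ℕ) (ha : 1 ≤ a) (hn : n = a + b)
    (hdom : DomLE (a :: List.replicate b 1) ((b + 1) :: List.replicate (a - 1) 1)) :
    ImmersionLE n (a :: List.replicate b 1) ((b + 1) :: List.replicate (a - 1) 1) := by
  intro ν ⟨_, hpos, hsum⟩
  have hab : a ≤ b + 1 := by simpa using hdom 1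
  exact hook_transpose_immersion_general ha (by omega) (by omega) (by omega) hpos (hsum.trans hn)
end

section
/- (1) Let n = 2k and for 0 ≤ j ≤ k set λ^j = (2^{k−j}, 1^{2j}). Then for 0 ≤ i, j ≤ k, the Kostka number K_{λ^i, λ^j} equals f^{(j+i, j−i)}, the number of standard Young tableaux of the two-row shape (j+i, j−i), when i ≤ j, and K_{λ^i, λ^j} = 0 when i > j. (2) Let n = 2k+1 and for 0 ≤ j ≤ k set λ^j = (2^{k−j}, 1^{2j+1}). Then K_{λ^i, λ^j} = f^{(j+i+1, j−i)} when i ≤ j, and K_{λ^i, λ^j} = 0 when i > j. -/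
open Finset MvPolynomial

/-! Zero, the smallest letter, can only occur in the first row of a semistandard tableau. Hence
`K_{l,(b,ν)} = 0` when `b` exceeds the first row of `l`, and when the two are equal, the first row
consists of zeros and deleting it gives `K_{(a,l),(a,ν)} = K_{l,ν}`. Cancelling the common twos
of `(2^a, 1^s)` and `(2^b, 1^t)` leaves, for `a < b`, a single column with content starting
in `2`, and for `b ≤ a` a shape `(2^q, 1^s)` with content `(1^t)`. The latter gives standard
tableaux, whose reflections in the diagonal are the standard tableaux of shape `(q + s, q)`. -/

/-- The cells of the diagram of `l` that carry the entry `v` in the tableau `T`, so that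
`HasContent` prescribes the cardinality of `EntryCells l T v` for each `v`. -/
abbrev EntryCells (l : List ℕ) (T : ℕ → ℕ → ℕ) (v : ℕ) : Type :=
  {c : ℕ × ℕ // c.2 < l.getD c.1 0 ∧ T c.1 c.2 = v}

/-- `l` and `l'` are conjugate shapes: reflection in the diagonal carries the diagram of `l`
onto that of `l'`. Trailing zeros are ignored. -/
def IsConjugate (l l' : List ℕ) : Prop :=
  ∀ r c, c < l.getD r 0 ↔ r < l'.getD c 0

/-- The two-column shape `(2^a, 1^b)`. -/
def twoColumn (a b : ℕ) : List ℕ := List.replicate a 2 ++ List.replicate b 1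

/-- The tableau obtained from a tableau `T` of shape `l` by raising every entry by one and
putting a row of zeros on top. The length of that row is left open, since entries outside the
diagram are zero as well. -/
def consZeroRow (l : List ℕ) (T : ℕ → ℕ → ℕ) : ℕ → ℕ → ℕ
  | 0, _ => 0
  | r + 1, c => if c < l.getD r 0 then T r c + 1 else 0

/-- The tableau obtained by deleting the first row and lowering every remaining entry by one,
the inverse operation to `consZeroRow`. -/
def lowerTail (T : ℕ → ℕ → ℕ) (r c : ℕ) : ℕ := T (r + 1) c - 1

section Cells

variable {l ν : List ℕ} {T : ℕ → ℕ → ℕ}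

theorem antitone_getD_of_pairwise_ge (hl : l.Pairwise (· ≥ ·)) : Antitone (l.getD · 0) := by
  intro r₁ r₂ hr
  obtain hr₂ | hr₂ := lt_or_ge r₂ l.length
  · simpa [List.getD_eq_getElem, hr.trans_lt hr₂, hr₂] using
      hl.sortedGE.getElem_ge_getElem_of_le hr
  · exact (List.getD_eq_default _ _ hr₂).trans_le (Nat.zero_le _)

instance finite_entryCells (l : List ℕ) (T : ℕ → ℕ → ℕ) (v : ℕ) : Finite (EntryCells l T v) := by
  refine ((Set.finite_Iio l.length).prod (Set.finite_Iio l.sum)).subset ?_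
  rintro ⟨r, c⟩ ⟨hc, -⟩
  obtain hr | hr := lt_or_ge r l.length
  · rw [List.getD_eq_getElem _ _ hr] at hc
    exact ⟨hr, hc.trans_le (List.le_sum_of_mem (List.getElem_mem hr))⟩
  · rw [List.getD_eq_default _ _ hr] at hc
    exact absurd hc c.not_lt_zero

theorem card_entryCells_zero (hT : ∀ r c, c < l.getD (r + 1) 0 → 0 < T (r + 1) c) :
    Nat.card (EntryCells l T 0) = #{c ∈ range (l.getD 0 0) | T 0 c = 0} := by
  rw [Nat.subtype_card ({0} ×ˢ {c ∈ range (l.getD 0 0) | T 0 c = 0}), card_product,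
    card_singleton, one_mul]
  rintro ⟨_ | r, c⟩
  · simp
  · simpa using fun hc => (hT r c hc).ne'

theorem IsSSYT.pos_of_row_succ (hT : IsSSYT l T) {r c : ℕ} (hc : c < l.getD (r + 1) 0) :
    0 < T (r + 1) c :=
  Nat.zero_lt_of_lt (hT.2.1 0 (r + 1) c r.succ_pos hc)

theorem IsSSYT.card_entryCells_zero_le (hT : IsSSYT l T) :
    Nat.card (EntryCells l T 0) ≤ l.getD 0 0 := by
  rw [card_entryCells_zero fun _ _ => hT.pos_of_row_succ]
  exact (card_filter_le _ _).trans_eq (card_range _)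

theorem kostka_cons_eq_zero {b : ℕ} (hb : l.getD 0 0 < b) : kostka l (b :: ν) = 0 := by
  have no_tableau : IsEmpty {T : ℕ → ℕ → ℕ // IsSSYT l T ∧ HasContent l T (b :: ν)} := by
    refine ⟨fun ⟨T, hT, hν⟩ => hb.not_ge ?_⟩
    exact (hν 0).symm.trans_le hT.card_entryCells_zero_le
  exact Nat.card_of_isEmpty

end Cells

section FirstRow

variable {a : ℕ} {l ν : List ℕ} {T : ℕ → ℕ → ℕ}

theorem IsSSYT.first_row_eq_zero (hT : IsSSYT (a :: l) T) (hν : HasContent (a :: l) T (a :: ν))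
    (c : ℕ) : T 0 c = 0 := by
  obtain hc | hc := lt_or_ge c a
  · have card_eq : #{c ∈ range a | T 0 c = 0} = #(range a) := by
      rw [card_range]
      exact (card_entryCells_zero fun _ _ hc => hT.pos_of_row_succ hc).symm.trans (hν 0)
    exact card_filter_eq_iff.1 card_eq c (mem_range.2 hc)
  · exact hT.2.2 0 c hc

theorem isSSYT_lowerTail (hl : Antitone (l.getD · 0)) (hT : IsSSYT (a :: l) T) :
    IsSSYT l (lowerTail T) := by
  refine ⟨fun r c₁ c₂ hc hc₂ => Nat.sub_le_sub_right (hT.1 (r + 1) c₁ c₂ hc hc₂) 1, ?_, ?_⟩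
  · intro r₁ r₂ c hr hc
    have pos : 0 < T (r₁ + 1) c := hT.pos_of_row_succ (hc.trans_le (hl hr.le))
    exact Nat.sub_lt_sub_right pos (hT.2.1 (r₁ + 1) (r₂ + 1) c (Nat.succ_lt_succ hr) hc)
  · intro r c hc
    simp [lowerTail, hT.2.2 (r + 1) c hc]

theorem consZeroRow_succ_of_lt {r c : ℕ} (hc : c < l.getD r 0) :
    consZeroRow l T (r + 1) c = T r c + 1 :=
  if_pos hc

theorem isSSYT_consZeroRow (a : ℕ) (hT : IsSSYT l T) : IsSSYT (a :: l) (consZeroRow l T) := by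
  obtain ⟨hrow, hcol, -⟩ := hT
  refine ⟨?_, ?_, ?_⟩
  · rintro (_ | r) c₁ c₂ hc hc₂
    · rfl
    · rw [List.getD_cons_succ] at hc₂
      rw [consZeroRow_succ_of_lt (hc.trans_lt hc₂), consZeroRow_succ_of_lt hc₂]
      exact Nat.succ_le_succ (hrow r c₁ c₂ hc hc₂)
  · rintro r₁ (_ | r₂) c hr hc
    · exact absurd hr r₁.not_lt_zero
    rw [List.getD_cons_succ] at hc
    rw [consZeroRow_succ_of_lt hc]
    obtain _ | r₁ := r₁
    · exact Nat.succ_pos _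
    · have : T r₁ c < T r₂ c := hcol r₁ r₂ c (Nat.lt_of_succ_lt_succ hr) hc
      simp only [consZeroRow]
      split_ifs <;> omega
  · rintro (_ | r) c hc
    · rfl
    · exact if_neg (not_lt.2 hc)

theorem IsSSYT.lowerTail_consZeroRow (hT : IsSSYT l T) :
    lowerTail (consZeroRow l T) = T := by
  funext r c
  simp only [lowerTail, consZeroRow]
  split_ifs with hc
  · exact Nat.add_sub_cancel _ _
  · exact (hT.2.2 r c (not_lt.1 hc)).symm

theorem IsSSYT.consZeroRow_lowerTail (hT : IsSSYT (a :: l) T)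
    (hν : HasContent (a :: l) T (a :: ν)) : consZeroRow l (lowerTail T) = T := by
  funext r c
  obtain _ | r := r
  · exact (hT.first_row_eq_zero hν c).symm
  simp only [lowerTail, consZeroRow]
  split_ifs with hc
  · exact Nat.sub_add_cancel (hT.pos_of_row_succ hc)
  · exact (hT.2.2 (r + 1) c (not_lt.1 hc)).symm

theorem card_entryCells_consZeroRow_zero (a : ℕ) (l : List ℕ) (T : ℕ → ℕ → ℕ) :
    Nat.card (EntryCells (a :: l) (consZeroRow l T) 0) = a := by
  rw [card_entryCells_zero]
  · simp [consZeroRow]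
  · intro r c hc
    rw [List.getD_cons_succ] at hc
    rw [consZeroRow_succ_of_lt hc]
    exact Nat.succ_pos _

theorem card_entryCells_consZeroRow_succ (a : ℕ) (l : List ℕ) (T : ℕ → ℕ → ℕ) (v : ℕ) :
    Nat.card (EntryCells (a :: l) (consZeroRow l T) (v + 1)) = Nat.card (EntryCells l T v) := by
  symm
  refine Nat.card_congr (Equiv.ofBijective (fun x => ⟨(x.1.1 + 1, x.1.2), ?_⟩) ⟨?_, ?_⟩)
  · obtain ⟨⟨r, c⟩, hc, hv⟩ := x
    exact ⟨hc, by rw [consZeroRow_succ_of_lt hc, hv]⟩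
  · rintro ⟨⟨r, c⟩, _⟩ ⟨⟨r', c'⟩, _⟩ h
    simpa using h
  · rintro ⟨⟨_ | r, c⟩, hc, hv⟩
    · simp [consZeroRow] at hv
    · rw [List.getD_cons_succ] at hc
      rw [consZeroRow_succ_of_lt hc] at hv
      exact ⟨⟨(r, c), hc, Nat.succ_injective hv⟩, rfl⟩

theorem hasContent_consZeroRow_iff :
    HasContent (a :: l) (consZeroRow l T) (a :: ν) ↔ HasContent l T ν := by
  unfold HasContent
  rw [← Nat.and_forall_add_one]
  simp only [card_entryCells_consZeroRow_zero, card_entryCells_consZeroRow_succ,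
    List.getD_cons_zero, List.getD_cons_succ, true_and]

theorem kostka_cons_cons (a : ℕ) (ν : List ℕ) (hl : Antitone (l.getD · 0)) :
    kostka (a :: l) (a :: ν) = kostka l ν :=
  Nat.card_congr
    { toFun := fun ⟨T, hT, hν⟩ => ⟨lowerTail T, isSSYT_lowerTail hl hT,
        hasContent_consZeroRow_iff.1 <| by rwa [hT.consZeroRow_lowerTail hν]⟩
      invFun := fun ⟨T, hT, hν⟩ => ⟨consZeroRow l T, isSSYT_consZeroRow a hT,
        hasContent_consZeroRow_iff.2 hν⟩
      left_inv := fun ⟨_, hT, hν⟩ => Subtype.ext (hT.consZeroRow_lowerTail hν)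
      right_inv := fun ⟨_, hT, _⟩ => Subtype.ext hT.lowerTail_consZeroRow }

theorem kostka_append_append (m ν : List ℕ) (hl : (m ++ l).Pairwise (· ≥ ·)) :
    kostka (m ++ l) (m ++ ν) = kostka l ν := by
  induction m with
  | nil => rfl
  | cons a m ih =>
    have htail : (m ++ l).Pairwise (· ≥ ·) := hl.of_cons
    exact (kostka_cons_cons a _ (antitone_getD_of_pairwise_ge htail)).trans (ih htail)

end FirstRow

section Transpose

variable {l l' ν : List ℕ} {T : ℕ → ℕ → ℕ}

theorem IsConjugate.symm (hl : IsConjugate l l') : IsConjugate l' l :=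
  fun r c => (hl c r).symm

theorem HasContent.eq_of_entry_eq (hT : HasContent l T ν) (hν : ∀ v, ν.getD v 0 ≤ 1)
    {x y : ℕ × ℕ} (hx : x.2 < l.getD x.1 0) (hy : y.2 < l.getD y.1 0)
    (hxy : T x.1 x.2 = T y.1 y.2) : x = y := by
  have : Subsingleton (EntryCells l T (T x.1 x.2)) :=
    Finite.card_le_one_iff_subsingleton.1 ((hT _).trans_le (hν _))
  exact congrArg Subtype.val
    (Subsingleton.elim (⟨x, hx, rfl⟩ : EntryCells l T (T x.1 x.2)) ⟨y, hy, hxy.symm⟩)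

theorem HasContent.transpose (hl : IsConjugate l l') (hT : HasContent l T ν) :
    HasContent l' (fun r c => T c r) ν := fun v =>
  (Nat.card_congr ((Equiv.prodComm ℕ ℕ).subtypeEquiv fun c =>
    and_congr_left' (hl c.2 c.1).symm)).trans (hT v)

theorem IsSSYT.transpose (hl : IsConjugate l l') (hν : ∀ v, ν.getD v 0 ≤ 1) (hT : IsSSYT l T)
    (hTν : HasContent l T ν) : IsSSYT l' (fun r c => T c r) := by
  obtain ⟨hrow, hcol, hout⟩ := hT
  refine ⟨?_, ?_, ?_⟩
  · intro r c₁ c₂ hc hc₂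
    obtain rfl | hlt := hc.eq_or_lt
    · rfl
    · exact (hcol c₁ c₂ r hlt ((hl c₂ r).2 hc₂)).le
  · intro r₁ r₂ c hr hr₂
    have hr₂' : r₂ < l.getD c 0 := (hl c r₂).2 hr₂
    -- Entries are distinct, so a weak inequality along a row of `T` is strict.
    refine (hrow c r₁ r₂ hr.le hr₂').lt_of_ne fun heq => hr.ne ?_
    exact congrArg Prod.snd
      (hTν.eq_of_entry_eq hν (x := (c, r₁)) (y := (c, r₂)) (hr.trans hr₂') hr₂' heq)
  · intro r c hc
    exact hout c r (not_lt.1 fun h => hc.not_gt ((hl c r).1 h))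

theorem kostka_eq_of_isConjugate (hl : IsConjugate l l') (hν : ∀ v, ν.getD v 0 ≤ 1) :
    kostka l ν = kostka l' ν :=
  Nat.card_congr
    { toFun := fun T => ⟨fun r c => T.1 c r, T.2.1.transpose hl hν T.2.2, T.2.2.transpose hl⟩
      invFun := fun T =>
        ⟨fun r c => T.1 c r, T.2.1.transpose hl.symm hν T.2.2, T.2.2.transpose hl.symm⟩
      left_inv := fun _ => rfl
      right_inv := fun _ => rfl }

end Transpose

theorem twoColumn_add (a b s : ℕ) :
    twoColumn (a + b) s = List.replicate a 2 ++ twoColumn b s := by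
  simp [twoColumn, ← List.append_assoc]

theorem pairwise_ge_twoColumn (a s : ℕ) : (twoColumn a s).Pairwise (· ≥ ·) := by
  simp [twoColumn, List.pairwise_append, List.pairwise_replicate]

theorem getD_twoColumn (a s r : ℕ) :
    (twoColumn a s).getD r 0 = if r < a then 2 else if r < a + s then 1 else 0 := by
  simp only [twoColumn, List.getD_eq_getElem?_getD, List.getElem?_append, List.length_replicate,
    List.getElem?_replicate]
  split_ifs <;> first | rfl | omega

theorem isConjugate_twoColumn (q s : ℕ) : IsConjugate (twoColumn q s) [q + s, q] := by
  rintro r (_ | _ | c)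
  all_goals
    simp only [getD_twoColumn, List.getD_cons_zero, List.getD_cons_succ, List.getD_nil]
    split_ifs <;> omega

theorem kostka_twoColumn_replicate_append (d a s : ℕ) (ν : List ℕ) :
    kostka (twoColumn (d + a) s) (List.replicate d 2 ++ ν) = kostka (twoColumn a s) ν := by
  have hsorted := pairwise_ge_twoColumn (d + a) s
  rw [twoColumn_add] at hsorted ⊢
  exact kostka_append_append _ ν hsorted

theorem kostka_twoColumn_eq_fSYT {a b s t p q : ℕ} (ha : a = b + q) (hp : p = q + s)
    (ht : t = p + q) : kostka (twoColumn a s) (twoColumn b t) = fSYT [p, q] := by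
  subst ha hp
  have hones : ∀ v, (List.replicate t 1).getD v 0 ≤ 1 := fun v => by
    rw [List.getD_eq_getElem?_getD, List.getElem?_replicate]
    split_ifs <;> simp
  calc kostka (twoColumn (b + q) s) (twoColumn b t)
      = kostka (twoColumn q s) (List.replicate t 1) := kostka_twoColumn_replicate_append b q s _
    _ = kostka [q + s, q] (List.replicate t 1) :=
        kostka_eq_of_isConjugate (isConjugate_twoColumn q s) hones
    _ = fSYT [q + s, q] := by simp [fSYT, ht]

theorem kostka_twoColumn_eq_zero {a b : ℕ} (hab : a < b) (s : ℕ) (ν : List ℕ) :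
    kostka (twoColumn a s) (List.replicate b 2 ++ ν) = 0 := by
  obtain ⟨d, rfl⟩ := Nat.exists_eq_add_of_lt hab
  rw [add_assoc, ← List.replicate_append_replicate, List.append_assoc]
  refine (kostka_twoColumn_replicate_append a 0 s _).trans (kostka_cons_eq_zero ?_)
  rw [getD_twoColumn]
  split_ifs <;> omega

/-- Kostka numbers of two-column shapes. For `n = 2k` and
`λ^j = (2^{k-j}, 1^{2j})`, `K_{λ^i,λ^j} = f^{(j+i, j-i)}` when `i ≤ j` and `0`
when `i > j`; for `n = 2k+1` and `λ^j = (2^{k-j}, 1^{2j+1})`,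
`K_{λ^i,λ^j} = f^{(j+i+1, j-i)}` when `i ≤ j` and `0` when `i > j`. -/
theorem kostka_two_column (k : ℕ) :
    (∀ i j, i ≤ k → j ≤ k →
      (i ≤ j → kostka (List.replicate (k - i) 2 ++ List.replicate (2 * i) 1)
          (List.replicate (k - j) 2 ++ List.replicate (2 * j) 1) = fSYT [j + i, j - i]) ∧
      (j < i → kostka (List.replicate (k - i) 2 ++ List.replicate (2 * i) 1)
          (List.replicate (k - j) 2 ++ List.replicate (2 * j) 1) = 0)) ∧
    (∀ i j, i ≤ k → j ≤ k →
      (i ≤ j → kostka (List.replicate (k - i) 2 ++ List.replicate (2 * i + 1) 1)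
          (List.replicate (k - j) 2 ++ List.replicate (2 * j + 1) 1) = fSYT [j + i + 1, j - i]) ∧
      (j < i → kostka (List.replicate (k - i) 2 ++ List.replicate (2 * i + 1) 1)
          (List.replicate (k - j) 2 ++ List.replicate (2 * j + 1) 1) = 0)) := by
  refine ⟨fun i j hi hj => ⟨fun hij => ?_, fun hji => ?_⟩,
    fun i j hi hj => ⟨fun hij => ?_, fun hji => ?_⟩⟩
  · exact kostka_twoColumn_eq_fSYT (by omega) (by omega) (by omega)
  · exact kostka_twoColumn_eq_zero (by omega) _ _
  · exact kostka_twoColumn_eq_fSYT (by omega) (by omega) (by omega)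
  · exact kostka_twoColumn_eq_zero (by omega) _ _
end

section
/- Let n = 2k with λ^j = (2^{k−j}, 1^{2j}) for 0 ≤ j ≤ k (respectively n = 2k+1 with λ^j = (2^{k−j}, 1^{2j+1})). For 0 ≤ i < j ≤ k: (1) λ^j ≤_I λ^i in the immersion poset if and only if f^{λ^i} ≥ f^{λ^j}; (2) λ^i and λ^j are incomparable in the immersion poset if and only if f^{λ^j} > f^{λ^i}. -/
open Finset MvPolynomial

/-- The two-column partition `(2^{k-m}, 1^{2m})` of `2k`. -/
def twoColE (k m : ℕ) : List ℕ := List.replicate (k - m) 2 ++ List.replicate (2 * m) 1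

/-- The two-column partition `(2^{k-m}, 1^{2m+1})` of `2k+1`. -/
def twoColO (k m : ℕ) : List ℕ := List.replicate (k - m) 2 ++ List.replicate (2 * m + 1) 1

/-!
A two-column tableau is a pair of column sets `(A, B)`, and its rows weakly increase exactly when
every initial segment of the alphabet contains at most as many elements of `B` as of `A`. A letter
occurring three times does not fit into two columns, and a letter occurring twice lies in both, so
deleting the `r` letters that occur twice gives `K_{(2^q,1^d),(2^r,1^m)} = f^{(2^{q-r},1^d)}`, or
`0` if `q < r`. The hook formula, obtained from the ballot recursion, yields
`f^{(2^{q+1},1^d)} / f^{(2^q,1^d)} = (n + 1) (n + 2) / ((q + 1) (q + d + 2))` with `n = 2 q + d`.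
For fixed `n` the denominator increases with `q`, so an inequality `f^{(2^q,1^{d+2e})} ≤
f^{(2^{q+e},1^d)}` survives the removal of a row of length two from both shapes. Hence comparing
standard tableaux compares all Kostka numbers. In the other direction the content `(2^{q'},1^{d'})`
rules out `(2^{q'},1^{d'}) ≤_I (2^q,1^d)` whenever `q < q'`.
-/

section Shape

/-- The two-column partition `(2^q, 1^d)`. -/
def twoColumnShape (q d : ℕ) : List ℕ := List.replicate q 2 ++ List.replicate d 1

theorem sum_twoColumnShape (q d : ℕ) : (twoColumnShape q d).sum = 2 * q + d := by
  simp [twoColumnShape, mul_comm]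

theorem getD_twoColumnShape (q d i : ℕ) :
    (twoColumnShape q d).getD i 0 = if i < q then 2 else if i < q + d then 1 else 0 := by
  simp only [twoColumnShape, List.getD_eq_getElem?_getD, List.getElem?_append,
    List.length_replicate, List.getElem?_replicate]
  grind

theorem isPartitionOf_twoColumnShape (q d : ℕ) :
    IsPartitionOf (2 * q + d) (twoColumnShape q d) := by
  refine ⟨?_, ?_, sum_twoColumnShape q d⟩
  · simp +contextual [twoColumnShape, List.pairwise_append, List.pairwise_replicate]
  · simp only [twoColumnShape, List.mem_append, List.mem_replicate]
    omega

theorem IsPartitionOf.exists_eq_twoColumnShape {n : ℕ} {ν : List ℕ} (hν : IsPartitionOf n ν)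
    (hle : ∀ x ∈ ν, x ≤ 2) : ∃ r m, ν = twoColumnShape r m := by
  obtain ⟨hsorted, hpos, -⟩ := hν
  induction ν with
  | nil => exact ⟨0, 0, rfl⟩
  | cons x ν ih =>
    simp only [List.forall_mem_cons, List.pairwise_cons] at hsorted hpos hle
    obtain ⟨r, m, rfl⟩ := ih hle.2 hsorted.2 hpos.2
    obtain rfl | rfl : x = 1 ∨ x = 2 := by omega
    · obtain rfl : r = 0 := by
        by_contra hr
        simpa using hsorted.1 2 (by simp [twoColumnShape, hr])
      exact ⟨0, m + 1, by simp [twoColumnShape, List.replicate_succ]⟩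
    · exact ⟨r + 1, m, by simp [twoColumnShape, List.replicate_succ]⟩

end Shape

section Columns

/-- A strictly increasing column of height `p`, extended by `0`. -/
structure IsColumn (p : ℕ) (a : ℕ → ℕ) : Prop where
  strictMonoOn : StrictMonoOn a (Set.Iio p)
  eq_zero : ∀ i, p ≤ i → a i = 0

-- The left-hand side is the form in which the lemmas on `Nat.nth` bound the index.
theorem lt_card_toFinset_mem_iff {A : Finset ℕ} {i : ℕ} :
    (∀ hA : (Set.ofPred (· ∈ A)).Finite, i < #hA.toFinset) ↔ i < #A := by
  have htoFinset (hA : (Set.ofPred (· ∈ A)).Finite) : hA.toFinset = A := by ext; simp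
  simp only [htoFinset]
  exact ⟨fun h => h A.finite_toSet, fun h _ => h⟩

theorem isColumn_nth_mem (A : Finset ℕ) : IsColumn #A (Nat.nth (· ∈ A)) where
  strictMonoOn _ _ _ hj hij := Nat.nth_lt_nth' hij (lt_card_toFinset_mem_iff.2 hj)
  eq_zero _ hi := by
    by_contra hne
    exact hi.not_gt (lt_card_toFinset_mem_iff.1 (Nat.lt_card_toFinset_of_nth_ne_zero hne))

theorem image_nth_mem_range_card (A : Finset ℕ) : (range #A).image (Nat.nth (· ∈ A)) = A := by
  ext x
  simp only [mem_image, mem_range]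
  constructor
  · rintro ⟨i, hi, rfl⟩
    exact Nat.nth_mem i (lt_card_toFinset_mem_iff.2 hi)
  · intro hx
    obtain ⟨i, hi, rfl⟩ := Nat.exists_lt_card_nth_eq hx
    exact ⟨i, lt_card_toFinset_mem_iff.1 hi, rfl⟩

theorem count_mem_eq_card {A : Finset ℕ} {n : ℕ} (hA : A ⊆ range n) :
    Nat.count (· ∈ A) n = #A := by
  rw [Nat.count_eq_card_filter_range, filter_mem_eq_inter, inter_eq_right.2 hA]

theorem forall_nth_le_nth_iff {A B : Finset ℕ} (hBA : #B ≤ #A) :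
    (∀ i < #B, Nat.nth (· ∈ A) i ≤ Nat.nth (· ∈ B) i) ↔
      ∀ x, Nat.count (· ∈ B) x ≤ Nat.count (· ∈ A) x := by
  constructor
  · intro hle x
    by_contra! hlt
    set i := Nat.count (· ∈ A) x
    have hi : i < #B := lt_card_toFinset_mem_iff.1 fun hB => hlt.trans_le (Nat.count_le_card hB x)
    have hiA := lt_card_toFinset_mem_iff.2 (hi.trans_le hBA)
    have hx : Nat.nth (· ∈ A) i < x := (hle i hi).trans_lt (Nat.nth_lt_of_lt_count hlt)
    exact (Nat.count_strict_mono (Nat.nth_mem i hiA) hx).ne (Nat.count_nth hiA)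
  · intro hle i hi
    have hcount := Nat.count_nth_succ (lt_card_toFinset_mem_iff.2 hi)
    refine Nat.lt_succ_iff.1 (Nat.nth_lt_of_lt_count ?_)
    exact (Nat.lt_succ_self i).trans_le (hcount.ge.trans (hle _))

namespace IsColumn

variable {p : ℕ} {a : ℕ → ℕ}

theorem injOn (ha : IsColumn p a) : Set.InjOn a (range p) := by
  rw [coe_range]
  exact ha.strictMonoOn.injOn

theorem card_image (ha : IsColumn p a) : #((range p).image a) = p := by
  rw [card_image_of_injOn ha.injOn, card_range]

theorem nth_mem_image (ha : IsColumn p a) : Nat.nth (· ∈ (range p).image a) = a := by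
  funext i
  have hdom : {i | ∀ h : (Set.ofPred (· ∈ (range p).image a)).Finite, i < #h.toFinset} =
      Set.Iio p := by
    ext i
    exact lt_card_toFinset_mem_iff.trans (by rw [ha.card_image, Set.mem_Iio])
  rcases lt_or_ge i p with hi | hi
  · refine (Nat.eq_nth_of_strictMonoOn_of_mapsTo_of_surjOn a ?_ ?_ ?_ (hdom ▸ hi)).symm
    · rw [hdom]
      intro x hx
      simpa using hx
    · rw [hdom]
      exact fun i hi => mem_image_of_mem a (mem_range.2 hi)
    · exact hdom ▸ ha.strictMonoOn
  · rw [ha.eq_zero i hi]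
    exact (isColumn_nth_mem _).eq_zero i (ha.card_image.trans_le hi)

theorem card_filter_eq (ha : IsColumn p a) (k : ℕ) :
    #{i ∈ range p | a i = k} = if k ∈ (range p).image a then 1 else 0 := by
  rw [card_filter, ← sum_image (f := fun x => if x = k then 1 else 0) ha.injOn, sum_ite_eq']

end IsColumn

end Columns

section Tableaux

variable {q d : ℕ} {T : ℕ → ℕ → ℕ}

theorem isSSYT_twoColumnShape_iff :
    IsSSYT (twoColumnShape q d) T ↔
      IsColumn (q + d) (T · 0) ∧ IsColumn q (T · 1) ∧ (∀ i < q, T i 0 ≤ T i 1) ∧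
        ∀ i j, 2 ≤ j → T i j = 0 := by
  simp only [IsSSYT, getD_twoColumnShape]
  constructor
  · rintro ⟨hrow, hcol, hzero⟩
    refine ⟨⟨fun i _ j hj hij => hcol i j 0 hij ?_, fun i hi => hzero i 0 ?_⟩,
      ⟨fun i _ j hj hij => hcol i j 1 hij ?_, fun i hi => hzero i 1 ?_⟩,
      fun i hi => hrow i 0 1 zero_le_one ?_, fun i j hj => hzero i j ?_⟩ <;> grind
  · rintro ⟨h0, h1, hrow, hzero⟩
    refine ⟨fun i j₁ j₂ hj hj₂ => ?_, fun i₁ i₂ j hi hj => ?_, fun i j hj => ?_⟩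
    · obtain rfl | ⟨rfl, rfl, hi⟩ : j₁ = j₂ ∨ j₁ = 0 ∧ j₂ = 1 ∧ i < q := by grind
      · rfl
      · exact hrow i hi
    · obtain ⟨rfl, hi₂⟩ | ⟨rfl, hi₂⟩ : j = 0 ∧ i₂ < q + d ∨ j = 1 ∧ i₂ < q := by grind
      · exact h0.strictMonoOn (hi.trans hi₂) hi₂ hi
      · exact h1.strictMonoOn (hi.trans hi₂) hi₂ hi
    · obtain ⟨rfl, hi⟩ | ⟨rfl, hi⟩ | hj₂ : j = 0 ∧ q + d ≤ i ∨ j = 1 ∧ q ≤ i ∨ 2 ≤ j := by grind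
      · exact h0.eq_zero i hi
      · exact h1.eq_zero i hi
      · exact hzero i j hj₂

theorem card_cells_twoColumnShape (q d : ℕ) (T : ℕ → ℕ → ℕ) (k : ℕ) :
    Nat.card {c : ℕ × ℕ // c.2 < (twoColumnShape q d).getD c.1 0 ∧ T c.1 c.2 = k} =
      #{i ∈ range (q + d) | T i 0 = k} + #{i ∈ range q | T i 1 = k} := by
  have hdisj : Disjoint ({i ∈ range (q + d) | T i 0 = k} ×ˢ {0})
      ({i ∈ range q | T i 1 = k} ×ˢ {1}) :=
    disjoint_product.2 (.inr (by simp))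
  rw [Nat.subtype_card (_ ∪ _), card_union_of_disjoint hdisj]
  · simp
  · rintro ⟨i, j⟩
    simp only [getD_twoColumnShape, mem_union, mem_product, mem_filter, mem_range, mem_singleton]
    grind

/-- The column sets of the two-column tableaux of content `ν`: the first column has height `p`, the
second height `q`, and weak increase along rows becomes a ballot condition. -/
def columnPairs (p q : ℕ) (ν : ℕ → ℕ) : Set (Finset ℕ × Finset ℕ) :=
  {P | #P.1 = p ∧ #P.2 = q ∧ (∀ x, Nat.count (· ∈ P.2) x ≤ Nat.count (· ∈ P.1) x) ∧
    ∀ k, ((if k ∈ P.1 then 1 else 0) + if k ∈ P.2 then 1 else 0) = ν k}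

/-- The filling with columns listing `A` and `B` in increasing order; below them `Nat.nth` takes its
junk value `0`, which is the value `IsSSYT` prescribes outside the diagram. -/
noncomputable def fillingOfColumns (A B : Finset ℕ) : ℕ → ℕ → ℕ
  | i, 0 => Nat.nth (· ∈ A) i
  | i, 1 => Nat.nth (· ∈ B) i
  | _, _ + 2 => 0

theorem hasContent_twoColumnShape_iff (hT : IsSSYT (twoColumnShape q d) T) (ν : List ℕ) :
    HasContent (twoColumnShape q d) T ν ↔
      ∀ k, ((if k ∈ (range (q + d)).image (T · 0) then 1 else 0) +
        if k ∈ (range q).image (T · 1) then 1 else 0) = ν.getD k 0 := by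
  obtain ⟨h0, h1, -, -⟩ := isSSYT_twoColumnShape_iff.1 hT
  simp only [HasContent, card_cells_twoColumnShape, h0.card_filter_eq, h1.card_filter_eq]

theorem columnSets_mem_columnPairs {ν : List ℕ} (hT : IsSSYT (twoColumnShape q d) T)
    (hν : HasContent (twoColumnShape q d) T ν) :
    ((range (q + d)).image (T · 0), (range q).image (T · 1)) ∈
      columnPairs (q + d) q (ν.getD · 0) := by
  obtain ⟨h0, h1, hrow, -⟩ := isSSYT_twoColumnShape_iff.1 hT
  refine ⟨h0.card_image, h1.card_image, ?_, (hasContent_twoColumnShape_iff hT ν).1 hν⟩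
  rw [← forall_nth_le_nth_iff (by simp [h0.card_image, h1.card_image]), h0.nth_mem_image,
    h1.nth_mem_image, h1.card_image]
  exact hrow

theorem isSSYT_fillingOfColumns {A B : Finset ℕ} (hA : #A = q + d) (hB : #B = q)
    (hAB : ∀ x, Nat.count (· ∈ B) x ≤ Nat.count (· ∈ A) x) :
    IsSSYT (twoColumnShape q d) (fillingOfColumns A B) := by
  refine isSSYT_twoColumnShape_iff.2 ⟨hA ▸ isColumn_nth_mem A, hB ▸ isColumn_nth_mem B, ?_, ?_⟩
  · subst hB
    exact (forall_nth_le_nth_iff (by omega)).2 hAB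
  · rintro i (_ | _ | j) hj
    · omega
    · omega
    · rfl

theorem kostka_twoColumnShape (q d : ℕ) (ν : List ℕ) :
    kostka (twoColumnShape q d) ν = (columnPairs (q + d) q (ν.getD · 0)).ncard := by
  refine Set.BijOn.ncard_eq (f := fun T => ((range (q + d)).image (T · 0), (range q).image (T · 1)))
    (s := {T | IsSSYT (twoColumnShape q d) T ∧ HasContent (twoColumnShape q d) T ν})
    (Set.InvOn.bijOn (f' := fun P => fillingOfColumns P.1 P.2) ⟨?_, ?_⟩ ?_ ?_)
  · rintro T ⟨hT, -⟩
    obtain ⟨h0, h1, -, hzero⟩ := isSSYT_twoColumnShape_iff.1 hT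
    funext i j
    rcases j with _ | _ | j
    · exact congrFun h0.nth_mem_image i
    · exact congrFun h1.nth_mem_image i
    · exact (hzero i (j + 2) (by omega)).symm
  · rintro ⟨A, B⟩ ⟨hA, hB, -, -⟩
    exact Prod.ext (hA ▸ image_nth_mem_range_card A) (hB ▸ image_nth_mem_range_card B)
  · rintro T ⟨hT, hν⟩
    exact columnSets_mem_columnPairs hT hν
  · rintro ⟨A, B⟩ ⟨hA, hB, hAB, hν⟩
    have hT := isSSYT_fillingOfColumns hA hB hAB
    refine ⟨hT, (hasContent_twoColumnShape_iff hT ν).2 ?_⟩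
    have hA' : (range (q + d)).image (fillingOfColumns A B · 0) = A :=
      hA ▸ image_nth_mem_range_card A
    have hB' : (range q).image (fillingOfColumns A B · 1) = B :=
      hB ▸ image_nth_mem_range_card B
    rw [hA', hB']
    exact hν

end Tableaux

section Ballot

/-- The `s`-element sets `C ⊆ {0, …, m - 1}` such that every initial segment contains at most as
many elements as non-elements of `C`: the second columns of the standard Young tableaux with two
columns, of heights `m - s` and `s`. -/
def ballotSubsets (m s : ℕ) : Finset (Finset ℕ) :=
  {C ∈ powersetCard s (range m) | ∀ x ≤ m, 2 * Nat.count (· ∈ C) x ≤ x}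

theorem ballotSubsets_zero_right (m : ℕ) : ballotSubsets m 0 = {∅} := by
  simp [ballotSubsets, filter_singleton]

theorem ballotSubsets_eq_empty {m s : ℕ} (h : m < 2 * s) : ballotSubsets m s = ∅ := by
  refine filter_eq_empty_iff.2 fun C hC hballot => ?_
  obtain ⟨hsub, hcard⟩ := mem_powersetCard.1 hC
  have := hballot m le_rfl
  rw [count_mem_eq_card hsub] at this
  omega

theorem ballot_succ_iff {m : ℕ} {C : Finset ℕ} (hC : C ⊆ range (m + 1)) (hcard : 2 * #C ≤ m + 1) :
    (∀ x ≤ m + 1, 2 * Nat.count (· ∈ C) x ≤ x) ↔ ∀ x ≤ m, 2 * Nat.count (· ∈ C) x ≤ x := by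
  refine ⟨fun h x hx => h x (by omega), fun h x hx => ?_⟩
  obtain hx | rfl := Nat.le_succ_iff.1 hx
  · exact h x hx
  · rwa [Nat.succ_eq_add_one, count_mem_eq_card hC]

theorem count_mem_insert_of_le {m x : ℕ} (C : Finset ℕ) (hx : x ≤ m) :
    Nat.count (· ∈ insert m C) x = Nat.count (· ∈ C) x := by
  simp only [Nat.count_eq_card_filter_range]
  congr 1
  refine filter_congr fun y hy => ?_
  grind

theorem card_ballotSubsets_succ_succ {m s : ℕ} (h : 2 * (s + 1) ≤ m + 1) :
    #(ballotSubsets (m + 1) (s + 1)) = #(ballotSubsets m (s + 1)) + #(ballotSubsets m s) := by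
  have hsubset {C : Finset ℕ} (hC : C ⊆ range m) : C ⊆ range (m + 1) :=
    hC.trans (range_subset_range.2 m.le_succ)
  have hnotMem {t : ℕ} {C : Finset ℕ} (hC : C ∈ powersetCard t (range m)) : m ∉ C :=
    fun hm => notMem_range_self ((mem_powersetCard.1 hC).1 hm)
  have hwithout : {C ∈ powersetCard (s + 1) (range m) |
      ∀ x ≤ m + 1, 2 * Nat.count (· ∈ C) x ≤ x} = ballotSubsets m (s + 1) := by
    refine filter_congr fun C hC => ?_
    obtain ⟨hsub, hcard⟩ := mem_powersetCard.1 hC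
    exact ballot_succ_iff (hsubset hsub) (hcard ▸ h)
  have hwith : {C ∈ powersetCard s (range m) |
      ∀ x ≤ m + 1, 2 * Nat.count (· ∈ insert m C) x ≤ x} = ballotSubsets m s := by
    refine filter_congr fun C hC => ?_
    obtain ⟨hsub, hcard⟩ := mem_powersetCard.1 hC
    rw [ballot_succ_iff (insert_subset (self_mem_range_succ m) (hsubset hsub))
      (by rwa [card_insert_of_notMem (hnotMem hC), hcard])]
    exact forall₂_congr fun x hx => by rw [count_mem_insert_of_le C hx]
  have hinj : Set.InjOn (insert m) (ballotSubsets m s : Set (Finset ℕ)) := by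
    intro C hC C' hC' heq
    rw [← erase_insert (hnotMem (filter_subset _ _ hC)), heq,
      erase_insert (hnotMem (filter_subset _ _ hC'))]
  have hdisj : Disjoint (ballotSubsets m (s + 1)) ((ballotSubsets m s).image (insert m)) := by
    refine disjoint_left.2 fun C hC hC' => ?_
    obtain ⟨C', -, rfl⟩ := mem_image.1 hC'
    exact hnotMem (filter_subset _ _ hC) (mem_insert_self m C')
  rw [ballotSubsets, range_add_one, powersetCard_succ_insert notMem_range_self, filter_union,
    filter_image, hwithout, hwith, card_union_of_disjoint hdisj, card_image_of_injOn hinj]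

open scoped Nat in
theorem card_ballotSubsets_mul_factorial (m s e : ℕ) (h : 2 * s + e = m + 1) :
    #(ballotSubsets m s) * (s ! * (s + e)!) = e * m ! := by
  induction m generalizing s e with
  | zero =>
    obtain ⟨rfl, rfl⟩ : s = 0 ∧ e = 1 := by omega
    simp [ballotSubsets_zero_right]
  | succ m ih =>
    obtain _ | s := s
    · obtain rfl : e = m + 2 := by omega
      simp [ballotSubsets_zero_right, Nat.factorial_succ]
    obtain _ | e := e
    · simp [ballotSubsets_eq_empty (show m + 1 < 2 * (s + 1) by omega)]
    · have hwithout := ih (s + 1) e (by omega)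
      have hwith := ih s (e + 2) (by omega)
      obtain rfl : m = 2 * s + e + 1 := by omega
      rw [card_ballotSubsets_succ_succ (by omega)]
      rw [show s + 1 + e = s + e + 1 by ring] at hwithout
      rw [show s + (e + 2) = s + e + 1 + 1 by ring] at hwith
      rw [show s + 1 + (e + 1) = s + e + 1 + 1 by ring]
      simp only [Nat.factorial_succ] at hwithout hwith ⊢
      linear_combination (s + e + 2) * hwithout + (s + 1) * hwith

end Ballot

section Kostka

theorem kostka_twoColumnShape_eq_zero_of_three_le {q d k : ℕ} {ν : List ℕ}
    (hk : 3 ≤ ν.getD k 0) : kostka (twoColumnShape q d) ν = 0 := by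
  have hempty : columnPairs (q + d) q (ν.getD · 0) = ∅ := by
    refine Set.eq_empty_of_forall_notMem ?_
    rintro P ⟨-, -, -, hcontent⟩
    have := hcontent k
    grind
  rw [kostka_twoColumnShape, hempty, Set.ncard_empty]

theorem kostka_twoColumnShape_eq_zero_of_lt {q d r m : ℕ} (hqr : q < r) :
    kostka (twoColumnShape q d) (twoColumnShape r m) = 0 := by
  have hempty : columnPairs (q + d) q ((twoColumnShape r m).getD · 0) = ∅ := by
    refine Set.eq_empty_of_forall_notMem ?_
    rintro P ⟨-, hB, -, hcontent⟩
    have hsub : range r ⊆ P.2 := fun k hk => by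
      have := hcontent k
      grind [getD_twoColumnShape]
    have hle := card_le_card hsub
    rw [card_range, hB] at hle
    omega
  rw [kostka_twoColumnShape, hempty, Set.ncard_empty]

/-- The set `{0, …, r - 1} ∪ (r + C)`: a column that contains the `r` letters occurring twice, and
those of the subsequent letters recorded by `C`. -/
def adjoinPrefix (r : ℕ) (C : Finset ℕ) : Finset ℕ := range r ∪ C.map (addLeftEmbedding r)

variable {r : ℕ} {C : Finset ℕ}

theorem mem_adjoinPrefix_of_lt {k : ℕ} (hk : k < r) : k ∈ adjoinPrefix r C :=
  mem_union_left _ (mem_range.2 hk)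

theorem add_mem_adjoinPrefix_iff {c : ℕ} : r + c ∈ adjoinPrefix r C ↔ c ∈ C := by
  simp [adjoinPrefix]

theorem card_adjoinPrefix (r : ℕ) (C : Finset ℕ) : #(adjoinPrefix r C) = r + #C := by
  rw [adjoinPrefix, card_union_of_disjoint, card_range, card_map]
  exact disjoint_range_addLeftEmbedding r _

theorem count_adjoinPrefix_add (x : ℕ) :
    Nat.count (· ∈ adjoinPrefix r C) (r + x) = r + Nat.count (· ∈ C) x := by
  rw [Nat.count_add, Nat.count_of_forall fun k hk => mem_adjoinPrefix_of_lt hk]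
  simp only [add_mem_adjoinPrefix_iff]

theorem adjoinPrefix_injective (r : ℕ) : Function.Injective (adjoinPrefix r) := by
  intro C C' h
  ext c
  rw [← add_mem_adjoinPrefix_iff (r := r), h, add_mem_adjoinPrefix_iff]

theorem count_range_sdiff_add_count {m x : ℕ} (C : Finset ℕ) (hx : x ≤ m) :
    Nat.count (· ∈ range m \ C) x + Nat.count (· ∈ C) x = x := by
  induction x with
  | zero => simp
  | succ x ih =>
    have hmem : x ∈ range m \ C ↔ x ∉ C := by
      rw [mem_sdiff, mem_range, and_iff_right (by omega)]
    simp only [Nat.count_succ, hmem]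
    grind

theorem count_le_count_range_sdiff_iff {m : ℕ} (hC : C ⊆ range m) (hcard : 2 * #C ≤ m) :
    (∀ x, Nat.count (· ∈ C) x ≤ Nat.count (· ∈ range m \ C) x) ↔
      ∀ x ≤ m, 2 * Nat.count (· ∈ C) x ≤ x := by
  constructor
  · intro h x hx
    have := count_range_sdiff_add_count C hx
    have := h x
    omega
  · intro h x
    rcases le_total x m with hx | hx
    · have := count_range_sdiff_add_count C hx
      have := h x hx
      omega
    · have hmx : range m ⊆ range x := range_subset_range.2 hx
      rw [count_mem_eq_card (hC.trans hmx), count_mem_eq_card (sdiff_subset.trans hmx),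
        card_sdiff_of_subset hC, card_range]
      omega

theorem count_adjoinPrefix_le_iff {C' : Finset ℕ} :
    (∀ x, Nat.count (· ∈ adjoinPrefix r C) x ≤ Nat.count (· ∈ adjoinPrefix r C') x) ↔
      ∀ x, Nat.count (· ∈ C) x ≤ Nat.count (· ∈ C') x := by
  constructor
  · intro h x
    simpa only [count_adjoinPrefix_add, add_le_add_iff_left] using h (r + x)
  · intro h x
    rcases le_total x r with hx | hx
    · rw [Nat.count_of_forall (p := (· ∈ adjoinPrefix r C')) fun k hk =>
        mem_adjoinPrefix_of_lt (hk.trans_le hx)]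
      exact Nat.count_le _
    · obtain ⟨y, rfl⟩ := Nat.exists_eq_add_of_le hx
      simpa only [count_adjoinPrefix_add, add_le_add_iff_left] using h y

theorem adjoinPrefix_mem_columnPairs_iff {s d : ℕ} (hC : C ⊆ range (2 * s + d)) :
    (adjoinPrefix r (range (2 * s + d) \ C), adjoinPrefix r C) ∈
        columnPairs (r + s + d) (r + s) ((twoColumnShape r (2 * s + d)).getD · 0) ↔
      C ∈ ballotSubsets (2 * s + d) s := by
  have hcontent (k : ℕ) : ((if k ∈ adjoinPrefix r (range (2 * s + d) \ C) then 1 else 0) +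
      if k ∈ adjoinPrefix r C then 1 else 0) = (twoColumnShape r (2 * s + d)).getD k 0 := by
    rw [getD_twoColumnShape]
    rcases lt_or_ge k r with hk | hk
    · simp [hk, mem_adjoinPrefix_of_lt]
    · obtain ⟨c, rfl⟩ := Nat.exists_eq_add_of_le hk
      have := @hC c
      simp only [add_mem_adjoinPrefix_iff, mem_sdiff, mem_range] at this ⊢
      grind
  simp only [columnPairs, ballotSubsets, Set.mem_ofPred_eq, mem_filter, mem_powersetCard, hC,
    card_adjoinPrefix, count_adjoinPrefix_le_iff, hcontent, card_sdiff_of_subset hC, card_range,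
    implies_true, and_true, true_and, add_right_inj]
  constructor
  · rintro ⟨-, hcard, h⟩
    exact ⟨hcard, (count_le_count_range_sdiff_iff hC (by omega)).1 h⟩
  · rintro ⟨hcard, h⟩
    exact ⟨by omega, hcard, (count_le_count_range_sdiff_iff hC (by omega)).2 h⟩

theorem exists_eq_adjoinPrefix_of_mem_columnPairs {p q m : ℕ} {P : Finset ℕ × Finset ℕ}
    (hP : P ∈ columnPairs p q ((twoColumnShape r m).getD · 0)) :
    ∃ C ⊆ range m, (adjoinPrefix r (range m \ C), adjoinPrefix r C) = P := by
  obtain ⟨-, -, -, hcontent⟩ := hP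
  refine ⟨{c ∈ range m | r + c ∈ P.2}, filter_subset _ _, Prod.ext ?_ ?_⟩ <;>
  · ext k
    have := hcontent k
    simp only [getD_twoColumnShape] at this
    rcases lt_or_ge k r with hk | hk
    · simp only [mem_adjoinPrefix_of_lt hk]
      grind
    · obtain ⟨c, rfl⟩ := Nat.exists_eq_add_of_le hk
      simp only [add_mem_adjoinPrefix_iff]
      grind

theorem kostka_twoColumnShape_twoColumnShape (r s d : ℕ) :
    kostka (twoColumnShape (r + s) d) (twoColumnShape r (2 * s + d)) =
      #(ballotSubsets (2 * s + d) s) := by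
  have hsub {C : Finset ℕ} (hC : C ∈ ballotSubsets (2 * s + d) s) : C ⊆ range (2 * s + d) :=
    (mem_powersetCard.1 (filter_subset _ _ hC)).1
  rw [kostka_twoColumnShape, ← Set.ncard_coe_finset]
  symm
  refine Set.BijOn.ncard_eq
    (f := fun C => (adjoinPrefix r (range (2 * s + d) \ C), adjoinPrefix r C)) ⟨?_, ?_, ?_⟩
  · exact fun C hC => (adjoinPrefix_mem_columnPairs_iff (hsub hC)).2 hC
  · exact fun C _ C' _ h => adjoinPrefix_injective r (Prod.ext_iff.1 h).2
  · intro P hP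
    obtain ⟨C, hC, rfl⟩ := exists_eq_adjoinPrefix_of_mem_columnPairs hP
    exact ⟨C, (adjoinPrefix_mem_columnPairs_iff hC).1 hP, rfl⟩

theorem fSYT_twoColumnShape (q d : ℕ) :
    fSYT (twoColumnShape q d) = #(ballotSubsets (2 * q + d) q) := by
  rw [fSYT, sum_twoColumnShape, ← kostka_twoColumnShape_twoColumnShape 0 q d, zero_add]
  rfl

theorem kostka_twoColumnShape_eq_fSYT (r s d : ℕ) :
    kostka (twoColumnShape (r + s) d) (twoColumnShape r (2 * s + d)) =
      fSYT (twoColumnShape s d) := by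
  rw [kostka_twoColumnShape_twoColumnShape, fSYT_twoColumnShape]

end Kostka

section Immersion

open scoped Nat in
theorem fSYT_twoColumnShape_mul_factorial (q d : ℕ) :
    fSYT (twoColumnShape q d) * (q ! * (q + d + 1)!) = (d + 1) * (2 * q + d)! := by
  rw [fSYT_twoColumnShape]
  exact card_ballotSubsets_mul_factorial (2 * q + d) q (d + 1) rfl

theorem fSYT_twoColumnShape_succ (q d : ℕ) :
    fSYT (twoColumnShape (q + 1) d) * ((q + 1) * (q + d + 2)) =
      fSYT (twoColumnShape q d) * ((2 * q + d + 2) * (2 * q + d + 1)) := by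
  have h := fSYT_twoColumnShape_mul_factorial q d
  have hsucc := fSYT_twoColumnShape_mul_factorial (q + 1) d
  rw [show q + 1 + d + 1 = q + d + 1 + 1 by ring, show 2 * (q + 1) + d = 2 * q + d + 1 + 1 by ring]
    at hsucc
  simp only [Nat.factorial_succ (2 * q + d + 1), Nat.factorial_succ (2 * q + d),
    Nat.factorial_succ (q + d + 1), Nat.factorial_succ q] at hsucc
  have hpos : 0 < q.factorial * (q + d + 1).factorial := by positivity
  refine Nat.eq_of_mul_eq_mul_right hpos ?_
  linear_combination hsucc - (2 * q + d + 2) * (2 * q + d + 1) * h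

theorem fSYT_twoColumnShape_le_of_add_one {q d e : ℕ}
    (h : fSYT (twoColumnShape (q + 1) (d + 2 * e)) ≤ fSYT (twoColumnShape (q + 1 + e) d)) :
    fSYT (twoColumnShape q (d + 2 * e)) ≤ fSYT (twoColumnShape (q + e) d) := by
  set n := 2 * q + d + 2 * e
  have hstep := fSYT_twoColumnShape_succ q (d + 2 * e)
  have hstep' := fSYT_twoColumnShape_succ (q + e) d
  rw [show 2 * q + (d + 2 * e) = n by ring] at hstep
  rw [show 2 * (q + e) + d = n by ring, show q + e + 1 = q + 1 + e by ring] at hstep'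
  have hfactor : (q + 1) * (q + (d + 2 * e) + 2) ≤ (q + 1 + e) * (q + e + d + 2) :=
    Nat.le.intro (k := e * (e + d + 1)) (by ring)
  refine Nat.le_of_mul_le_mul_right ?_ (show 0 < (n + 2) * (n + 1) by positivity)
  rw [← hstep, ← hstep']
  exact Nat.mul_le_mul h hfactor

theorem fSYT_twoColumnShape_le_of_add {q d e : ℕ} (r : ℕ)
    (h : fSYT (twoColumnShape (r + q) (d + 2 * e)) ≤ fSYT (twoColumnShape (r + q + e) d)) :
    fSYT (twoColumnShape q (d + 2 * e)) ≤ fSYT (twoColumnShape (q + e) d) := by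
  induction r with
  | zero => simpa only [zero_add] using h
  | succ r ih =>
    refine ih (fSYT_twoColumnShape_le_of_add_one ?_)
    rwa [Nat.add_right_comm r q 1]

theorem kostka_twoColumnShape_le {q d e r m : ℕ} (hsum : 2 * r + m = 2 * q + d + 2 * e)
    (h : fSYT (twoColumnShape q (d + 2 * e)) ≤ fSYT (twoColumnShape (q + e) d)) :
    kostka (twoColumnShape q (d + 2 * e)) (twoColumnShape r m) ≤
      kostka (twoColumnShape (q + e) d) (twoColumnShape r m) := by
  rcases lt_or_ge q r with hr | hr
  · simp [kostka_twoColumnShape_eq_zero_of_lt hr]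
  · obtain ⟨s, rfl⟩ := Nat.exists_eq_add_of_le hr
    have hm : m = 2 * s + (d + 2 * e) := by omega
    have hm' : m = 2 * (s + e) + d := by omega
    calc kostka (twoColumnShape (r + s) (d + 2 * e)) (twoColumnShape r m)
        = fSYT (twoColumnShape s (d + 2 * e)) := by rw [hm, kostka_twoColumnShape_eq_fSYT]
      _ ≤ fSYT (twoColumnShape (s + e) d) := fSYT_twoColumnShape_le_of_add r h
      _ = kostka (twoColumnShape (r + s + e) d) (twoColumnShape r m) := by
        rw [hm', add_assoc r, kostka_twoColumnShape_eq_fSYT]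

theorem immersionLE_twoColumnShape_iff (q d e : ℕ) :
    ImmersionLE (2 * q + d + 2 * e) (twoColumnShape q (d + 2 * e)) (twoColumnShape (q + e) d) ↔
      fSYT (twoColumnShape q (d + 2 * e)) ≤ fSYT (twoColumnShape (q + e) d) := by
  constructor
  · intro h
    have hones : IsPartitionOf (2 * q + d + 2 * e) (List.replicate (2 * q + d + 2 * e) 1) := by
      simpa [twoColumnShape] using isPartitionOf_twoColumnShape 0 (2 * q + d + 2 * e)
    rw [fSYT, fSYT, sum_twoColumnShape, sum_twoColumnShape]
    convert h _ hones using 3 <;> ring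
  · intro h ν hν
    by_cases hle : ∀ x ∈ ν, x ≤ 2
    · obtain ⟨r, m, rfl⟩ := hν.exists_eq_twoColumnShape hle
      exact kostka_twoColumnShape_le (by rw [← sum_twoColumnShape, hν.2.2]) h
    · push Not at hle
      obtain ⟨x, hx, hlt⟩ := hle
      obtain ⟨k, hk, rfl⟩ := List.getElem_of_mem hx
      have hthree : 3 ≤ ν.getD k 0 := by simpa [hk] using Nat.succ_le_of_lt hlt
      rw [kostka_twoColumnShape_eq_zero_of_three_le hthree]
      exact Nat.zero_le _

theorem not_immersionLE_twoColumnShape {q d q' d' n : ℕ} (hlt : q < q')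
    (hq' : 2 * q' + d' = n) :
    ¬ ImmersionLE n (twoColumnShape q' d') (twoColumnShape q d) := by
  subst hq'
  intro h
  have hle := h _ (isPartitionOf_twoColumnShape q' d')
  have hself := kostka_twoColumnShape_twoColumnShape q' 0 d'
  simp only [add_zero, mul_zero, zero_add, ballotSubsets_zero_right, card_singleton] at hself
  rw [kostka_twoColumnShape_eq_zero_of_lt hlt, hself] at hle
  omega

theorem twoColumnShape_immersion_relations {q q' d d' n : ℕ} (hlt : q < q')
    (hq : 2 * q + d = n) (hq' : 2 * q' + d' = n) :
    (ImmersionLE n (twoColumnShape q d) (twoColumnShape q' d') ↔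
        fSYT (twoColumnShape q d) ≤ fSYT (twoColumnShape q' d')) ∧
      ((¬ ImmersionLE n (twoColumnShape q' d') (twoColumnShape q d) ∧
          ¬ ImmersionLE n (twoColumnShape q d) (twoColumnShape q' d')) ↔
        fSYT (twoColumnShape q' d') < fSYT (twoColumnShape q d)) := by
  have hiff : ImmersionLE n (twoColumnShape q d) (twoColumnShape q' d') ↔
      fSYT (twoColumnShape q d) ≤ fSYT (twoColumnShape q' d') := by
    obtain ⟨e, rfl⟩ := Nat.exists_eq_add_of_le hlt.le
    obtain rfl : d = d' + 2 * e := by omega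
    rw [← immersionLE_twoColumnShape_iff, ← hq, add_assoc]
  rw [hiff, not_le]
  exact ⟨Iff.rfl, and_iff_right (not_immersionLE_twoColumnShape hlt hq')⟩

end Immersion

/-- For `0 ≤ i < j ≤ k`, in both the even case `n = 2k` and the
odd case `n = 2k+1`: `λ^j ≤_I λ^i` iff `f^{λ^i} ≥ f^{λ^j}`, and `λ^i, λ^j` are
incomparable in the immersion poset iff `f^{λ^j} > f^{λ^i}`. -/
theorem two_column_immersion_relations (k i j : ℕ) (hij : i < j) (hjk : j ≤ k) :
    ((ImmersionLE (2 * k) (twoColE k j) (twoColE k i) ↔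
        fSYT (twoColE k j) ≤ fSYT (twoColE k i)) ∧
      ((¬ ImmersionLE (2 * k) (twoColE k i) (twoColE k j) ∧
          ¬ ImmersionLE (2 * k) (twoColE k j) (twoColE k i)) ↔
        fSYT (twoColE k i) < fSYT (twoColE k j))) ∧
    ((ImmersionLE (2 * k + 1) (twoColO k j) (twoColO k i) ↔
        fSYT (twoColO k j) ≤ fSYT (twoColO k i)) ∧
      ((¬ ImmersionLE (2 * k + 1) (twoColO k i) (twoColO k j) ∧
          ¬ ImmersionLE (2 * k + 1) (twoColO k j) (twoColO k i)) ↔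
        fSYT (twoColO k i) < fSYT (twoColO k j))) := by
  exact ⟨twoColumnShape_immersion_relations (by omega) (by omega) (by omega),
    twoColumnShape_immersion_relations (by omega) (by omega) (by omega)⟩
end
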